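/- arXiv:1312.6466 — 7 statements merged into one kernel-verified Lean document; each statement's English description precedes it below -/
import Mathlib

section
/- Suppose f ∈ G ∩ H_{β,L}, where either G = G_↑ and 0 < β ≤ 1, or G = G_conv and 1 ≤ β ≤ 2. Let (ℓ̂,û) be the multiscale confidence band built from kernels ψ^(ℓ), ψ^(u) satisfying the regularity and one-sided bias conditions. Then there exists a constant Δ < ∞, depending only on (β,L) and (ψ^(ℓ),ψ^(u)) (not on n), such that almost surely, for every n ≥ 1: sup_{t ∈ [ε_n, 1−ε_n]} ( û(t) − ℓ̂(t) ) ≤ Δ ρ_n ( 1 + (κ_α + T(ψ^(u)) + T(−ψ^(ℓ)))/ (log(en))^{1/2} ), where ρ_n := (log(en)/n)^{β/(2β+1)} and ε_n := ρ_n^{1/β}. -/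
/-!
Both bounds of the band are controlled by a single bandwidth `h = c ε_n`, where `c` depends only on
the support of the kernel and makes the window `[t - a h, t + b h]` fit into `[0, 1]`.

* Bias: a function in the Hölder class satisfies `|f x - f t - s (x - t)| ≤ L |x - t| ^ β`, with
  `s = 0` when `β ≤ 1` (`HolderClass.taylor`). When `β > 1` the class `G` consists of the convex
  functions, so it contains `x` and `-x`, and the one-sided bias conditions force the first moment
  of both kernels to vanish. In either case the slope disappears after integration, and the kernel
  average of `f` differs from `f t` by `O(h ^ β) = O(ρ_n)` (`kernel_bias`).
* Noise: the bound on the multiscale statistic gives `v ≤ √h ‖ψ‖ (Γ + T)`. Moreover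
  `Γ(d h) = O(√(log (e n)))` (`gam_le`) and `√(n ε_n) = √(log (e n)) / ρ_n` (`sqrt_mul_epsn`), so
  noise and penalty together are `O(ρ_n (1 + (κ + T) / √(log (e n))))`.

The lower bound of the band follows from the upper one after replacing `(f, v)` by `(-f, -v)`.
-/

open MeasureTheory Filter Set

/-- `Γ(u) = (2 log(e/u))^{1/2}`. -/
noncomputable def Gam (u : ℝ) : ℝ := Real.sqrt (2 * Real.log (Real.exp 1 / u))

/-- The Hölder class `H_{β,L}`: for `β ≤ 1` an ordinary Hölder condition, for
`1 < β ≤ 2` a Hölder condition of order `β - 1` on the derivative. -/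
def HolderClass (β L : ℝ) (f : ℝ → ℝ) : Prop :=
  (β ≤ 1 ∧ ∀ x y : ℝ, |f x - f y| ≤ L * |x - y| ^ β) ∨
  (1 < β ∧ ∃ f' : ℝ → ℝ, (∀ x : ℝ, HasDerivAt f (f' x) x) ∧
    ∀ x y : ℝ, |f' x - f' y| ≤ L * |x - y| ^ (β - 1))

/-- Kernel estimator `f̂_h(t) = ψY(h,t)/(n^{1/2} h ⟨1,ψ⟩)` of the white noise model,
where `ψY(h,t) = ∫_0^1 ψ((x-t)/h) dY(x) = n^{1/2} ∫_0^1 ψ((x-t)/h) f(x) dx + v(h,t)`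
and `v(h,t)` is the (pathwise) white-noise integral `∫_0^1 ψ((x-t)/h) dW(x)`. -/
noncomputable def fhat (n : ℕ) (f ψ : ℝ → ℝ) (v : ℝ → ℝ → ℝ) (h t : ℝ) : ℝ :=
  (Real.sqrt n * (∫ x in Set.Icc (0:ℝ) 1, ψ ((x - t) / h) * f x) + v h t) /
    (Real.sqrt n * h * ∫ x, ψ x)

/-- Lower confidence bound
`ℓ̂(t) = sup_{h > 0, t ∈ [a h, 1 - b h]} ( f̂_h(t) - ‖ψ‖(Γ((a+b)h) + κ)/(⟨1,ψ⟩ (nh)^{1/2}) )`. -/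
noncomputable def lband (n : ℕ) (f ψ : ℝ → ℝ) (a b κ : ℝ) (v : ℝ → ℝ → ℝ) (t : ℝ) : EReal :=
  ⨆ p : {h : ℝ // 0 < h ∧ a * h ≤ t ∧ t ≤ 1 - b * h},
    ((fhat n f ψ v (p : ℝ) t -
      Real.sqrt (∫ x, (ψ x)^2) * (Gam ((a + b) * (p : ℝ)) + κ) /
        ((∫ x, ψ x) * Real.sqrt (n * (p : ℝ))) : ℝ) : EReal)

/-- Upper confidence bound
`û(t) = inf_{h > 0, t ∈ [a h, 1 - b h]} ( f̂_h(t) + ‖ψ‖(Γ((a+b)h) + κ)/(⟨1,ψ⟩ (nh)^{1/2}) )`. -/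
noncomputable def uband (n : ℕ) (f ψ : ℝ → ℝ) (a b κ : ℝ) (v : ℝ → ℝ → ℝ) (t : ℝ) : EReal :=
  ⨅ p : {h : ℝ // 0 < h ∧ a * h ≤ t ∧ t ≤ 1 - b * h},
    ((fhat n f ψ v (p : ℝ) t +
      Real.sqrt (∫ x, (ψ x)^2) * (Gam ((a + b) * (p : ℝ)) + κ) /
        ((∫ x, ψ x) * Real.sqrt (n * (p : ℝ))) : ℝ) : EReal)

/-- `ρ_n = (log(en)/n)^{β/(2β+1)}`. -/
noncomputable def rhon (β : ℝ) (n : ℕ) : ℝ :=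
  (Real.log (Real.exp 1 * n) / n) ^ (β / (2 * β + 1))

/-- `ε_n = ρ_n^{1/β}`. -/
noncomputable def epsn (β : ℝ) (n : ℕ) : ℝ := rhon β n ^ (1 / β)

/-! ### The Hölder class -/

/-- First-order Taylor bound in the Hölder class; for `β ≤ 1` no linear term is needed. -/
lemma HolderClass.taylor {β L : ℝ} (hL : 0 < L) {f : ℝ → ℝ} (hf : HolderClass β L f)
    (t : ℝ) : ∃ s : ℝ, (β ≤ 1 → s = 0) ∧
      ∀ x, |f x - f t - s * (x - t)| ≤ L * |x - t| ^ β := by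
  rcases hf with ⟨_, h⟩ | ⟨hb, f', hd, h⟩
  · exact ⟨0, fun _ => rfl, fun x => by simpa using h x t⟩
  · refine ⟨f' t, fun h1 => absurd h1 (not_le.mpr hb), fun x => ?_⟩
    have key := (convex_uIcc t x).norm_image_sub_le_of_norm_hasDerivWithin_le
      (f := fun z => f z - f' t * z) (f' := fun z => f' z - f' t)
      (C := L * |x - t| ^ (β - 1)) (x := t) (y := x)
      (fun z _ => by
        have h1 : HasDerivAt (fun z => f' t * z) (f' t) z := by
          simpa using (hasDerivAt_id z).const_mul (f' t)
        exact ((hd z).fun_sub h1).hasDerivWithinAt)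
      (fun z hz => by
        rw [Real.norm_eq_abs]
        refine (h z t).trans (mul_le_mul_of_nonneg_left ?_ hL.le)
        exact Real.rpow_le_rpow (abs_nonneg _) (Set.abs_sub_left_of_mem_uIcc hz) (by linarith))
      Set.left_mem_uIcc Set.right_mem_uIcc
    rw [Real.norm_eq_abs, Real.norm_eq_abs] at key
    have e1 : f x - f t - f' t * (x - t) = f x - f' t * x - (f t - f' t * t) := by ring
    have e2 : |x - t| ^ β = |x - t| ^ (β - 1) * |x - t| := by
      rcases eq_or_ne |x - t| 0 with h0 | h0
      · rw [h0, Real.zero_rpow (by linarith), mul_zero]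
      · rw [Real.rpow_sub_one h0, div_mul_cancel₀ _ h0]
    rw [e1, e2, ← mul_assoc]
    exact key

lemma HolderClass.continuous {β L : ℝ} (hβ : 0 < β) (hL : 0 < L) {f : ℝ → ℝ}
    (hf : HolderClass β L f) : Continuous f := by
  rw [continuous_iff_continuousAt]
  intro t
  obtain ⟨s, -, hs⟩ := hf.taylor hL t
  have h0 : Tendsto (fun x => L * |x - t| ^ β) (nhds t) (nhds 0) := by
    have : Continuous fun x : ℝ => L * |x - t| ^ β :=
      continuous_const.mul ((by fun_prop : Continuous fun x : ℝ => |x - t|).rpow_const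
        fun _ => Or.inr hβ.le)
    simpa [Real.zero_rpow hβ.ne'] using this.tendsto t
  have h1 := squeeze_zero_norm (f := fun x => f x - f t - s * (x - t))
    (fun x => (Real.norm_eq_abs _).trans_le (hs x)) h0
  have h2 : Tendsto (fun x => f t + s * (x - t)) (nhds t) (nhds (f t)) := by
    have : Continuous fun x : ℝ => f t + s * (x - t) := by fun_prop
    simpa using this.tendsto t
  have h3 := h1.add h2
  rw [zero_add] at h3
  refine Tendsto.congr (fun x => ?_) h3
  ring

lemma HolderClass.neg {β L : ℝ} {f : ℝ → ℝ} (hf : HolderClass β L f) :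
    HolderClass β L (fun x => -f x) := by
  rcases hf with ⟨hb, h⟩ | ⟨hb, f', hd, h⟩
  · refine Or.inl ⟨hb, fun x y => ?_⟩
    rw [← neg_sub', abs_neg]
    exact h x y
  · refine Or.inr ⟨hb, fun x => -f' x, fun x => (hd x).neg, fun x y => ?_⟩
    rw [← neg_sub', abs_neg]
    exact h x y

/-! ### Kernels: integrability and bias -/

lemma integrable_of_integral_pos {ψ : ℝ → ℝ} (h : 0 < ∫ x, ψ x) : Integrable ψ := by
  by_contra hc
  rw [integral_undef hc] at h
  exact lt_irrefl _ h

lemma integrable_kernel_mul {a b : ℝ} {ψ : ℝ → ℝ} (hs : ∀ x, x ∉ Set.Icc (-a) b → ψ x = 0)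
    (hi : Integrable ψ) {g : ℝ → ℝ} (hg : Continuous g) : Integrable fun x => ψ x * g x := by
  have h := hi.integrableOn (s := Set.Icc (-a) b) |>.mul_continuousOn hg.continuousOn isCompact_Icc
  rwa [integrableOn_iff_integrable_of_support_subset] at h
  intro x hx
  by_contra hc
  exact hx (by simp [hs x hc])

lemma integral_sq_pos {a b : ℝ} {ψ : ℝ → ℝ} (hBV : BoundedVariationOn ψ univ)
    (hs : ∀ x, x ∉ Set.Icc (-a) b → ψ x = 0) (hp : 0 < ∫ x, ψ x) : 0 < ∫ x, (ψ x) ^ 2 := by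
  have hi := integrable_of_integral_pos hp
  have hz : ψ (b + 1) = 0 := hs _ fun h => by linarith [h.2]
  have hbd : ∀ x, ‖ψ x‖ ≤ (eVariationOn ψ univ).toReal := fun x => by
    have := hBV.dist_le (mem_univ x) (mem_univ (b + 1))
    rwa [hz, dist_zero_right] at this
  have hsq : Integrable fun x => (ψ x) ^ 2 := by
    simpa only [sq] using hi.bdd_mul hi.aestronglyMeasurable (Eventually.of_forall hbd)
  refine lt_of_le_of_ne (integral_nonneg fun x => sq_nonneg _) fun h0 => ?_
  have h1 := (integral_eq_zero_iff_of_nonneg (fun x => sq_nonneg (ψ x)) hsq).mp h0.symm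
  have h2 : ψ =ᵐ[volume] fun _ => 0 := h1.mono fun x hx => by simpa using hx
  rw [integral_congr_ae h2] at hp
  simp at hp

lemma kernel_change_of_variables {a b : ℝ} {ψ : ℝ → ℝ}
    (hs : ∀ x, x ∉ Set.Icc (-a) b → ψ x = 0) (f : ℝ → ℝ) {h t : ℝ} (hh : 0 < h)
    (h1 : a * h ≤ t) (h2 : t ≤ 1 - b * h) :
    ∫ x in Set.Icc (0 : ℝ) 1, ψ ((x - t) / h) * f x = h * ∫ y, ψ y * f (t + h * y) := by
  rw [setIntegral_eq_integral_of_forall_compl_eq_zero]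
  · have e : ∀ x, ψ ((x - t) / h) * f x =
        (fun z => ψ (z / h) * f (t + h * (z / h))) (x - t) := fun x => by
      simp only [mul_div_cancel₀ _ hh.ne', add_sub_cancel]
    simp_rw [e]
    rw [integral_sub_right_eq_self (fun z => ψ (z / h) * f (t + h * (z / h)))]
    rw [Measure.integral_comp_div (fun y => ψ y * f (t + h * y)) h, abs_of_pos hh, smul_eq_mul]
  · intro x hx
    rw [hs, zero_mul]
    rintro ⟨h3, h4⟩
    rw [le_div_iff₀ hh] at h3
    rw [div_le_iff₀ hh] at h4
    exact hx ⟨by linarith, by linarith⟩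

/-- Bias bound of order `h ^ β` for a kernel whose first moment vanishes when `β > 1`. -/
lemma kernel_bias {β L : ℝ} (hβ : 0 < β) (hL : 0 < L) {a b : ℝ} (ha : 0 ≤ a) (hb : 0 ≤ b)
    {ψ : ℝ → ℝ} (hs : ∀ x, x ∉ Set.Icc (-a) b → ψ x = 0) (hi : Integrable ψ)
    (hmom : 1 < β → ∫ x, ψ x * x = 0) :
    ∃ C : ℝ, 0 ≤ C ∧ ∀ f, HolderClass β L f → ∀ h t : ℝ, 0 < h → a * h ≤ t → t ≤ 1 - b * h →
      ∫ x in Set.Icc (0 : ℝ) 1, ψ ((x - t) / h) * f x ≤ h * (f t * ∫ x, ψ x) + h * (C * h ^ β) := by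
  refine ⟨∫ x, |ψ x| * (L * (a + b) ^ β), integral_nonneg fun x => by positivity, ?_⟩
  intro f hf h t hh h1 h2
  rw [kernel_change_of_variables hs f hh h1 h2, ← mul_add]
  refine mul_le_mul_of_nonneg_left ?_ hh.le
  obtain ⟨s, hs0, hT⟩ := hf.taylor hL t
  have hfc := hf.continuous hβ hL
  have i1 : Integrable fun y => ψ y * f (t + h * y) :=
    integrable_kernel_mul hs hi (by fun_prop)
  have i2 : Integrable fun y => f t * ψ y := hi.const_mul _
  have i3 : Integrable fun y => s * h * (ψ y * y) :=
    (integrable_kernel_mul hs hi continuous_id).const_mul _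
  have hsm : s * h * ∫ y, ψ y * y = 0 := by
    rcases le_or_gt β 1 with h' | h'
    · rw [hs0 h', zero_mul, zero_mul]
    · rw [hmom h', mul_zero]
  have key : ∫ y, ψ y * (f (t + h * y) - f t - s * (t + h * y - t)) =
      (∫ y, ψ y * f (t + h * y)) - f t * ∫ y, ψ y := by
    have e : ∀ y, ψ y * (f (t + h * y) - f t - s * (t + h * y - t)) =
      ψ y * f (t + h * y) - f t * ψ y - s * h * (ψ y * y) := fun y => by ring
    simp_rw [e]
    have e1 := integral_sub (i1.sub i2) i3
    simp only [Pi.sub_apply] at e1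
    rw [e1, integral_sub i1 i2, integral_const_mul, integral_const_mul, hsm, sub_zero]
  have bound : ‖∫ y, ψ y * (f (t + h * y) - f t - s * (t + h * y - t))‖ ≤
      ∫ y, |ψ y| * (L * (a + b) ^ β) * h ^ β := by
    refine norm_integral_le_of_norm_le ((hi.abs.mul_const _).mul_const _)
      (Eventually.of_forall fun y => ?_)
    rw [norm_mul, Real.norm_eq_abs, Real.norm_eq_abs, mul_assoc]
    by_cases hy : y ∈ Set.Icc (-a) b
    · refine mul_le_mul_of_nonneg_left ((hT _).trans ?_) (abs_nonneg _)
      rw [mul_assoc, ← Real.mul_rpow (by positivity) hh.le]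
      refine mul_le_mul_of_nonneg_left (Real.rpow_le_rpow (abs_nonneg _) ?_ hβ.le) hL.le
      rw [add_sub_cancel_left, abs_mul, abs_of_pos hh, mul_comm]
      refine mul_le_mul_of_nonneg_right (abs_le.mpr ⟨?_, ?_⟩) hh.le <;> linarith [hy.1, hy.2]
    · simp [hs y hy]
  rw [integral_mul_const, key, Real.norm_eq_abs] at bound
  linarith [(abs_le.mp bound).2]

/-! ### The rates -/

lemma one_le_log_exp_mul {n : ℕ} (hn : 1 ≤ n) : 1 ≤ Real.log (Real.exp 1 * n) := by
  have hn' : (1 : ℝ) ≤ n := by exact_mod_cast hn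
  rw [Real.log_mul (Real.exp_pos 1).ne' (by positivity), Real.log_exp]
  linarith [Real.log_nonneg hn']

lemma epsn_eq {β : ℝ} (hβ : 0 < β) {n : ℕ} (hn : 1 ≤ n) :
    epsn β n = (Real.log (Real.exp 1 * n) / n) ^ (1 / (2 * β + 1)) := by
  have h1 := one_le_log_exp_mul hn
  rw [epsn, rhon, ← Real.rpow_mul (by positivity)]
  congr 1
  field_simp

lemma rhon_pos {β : ℝ} {n : ℕ} (hn : 1 ≤ n) : 0 < rhon β n := by
  have h1 := one_le_log_exp_mul hn
  have hn' : (1 : ℝ) ≤ n := by exact_mod_cast hn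
  exact Real.rpow_pos_of_pos (by positivity) _

lemma epsn_pos {β : ℝ} {n : ℕ} (hn : 1 ≤ n) : 0 < epsn β n :=
  Real.rpow_pos_of_pos (rhon_pos hn) _

lemma epsn_rpow {β : ℝ} (hβ : 0 < β) {n : ℕ} (hn : 1 ≤ n) : epsn β n ^ β = rhon β n := by
  rw [epsn, ← Real.rpow_mul (rhon_pos hn).le, one_div_mul_cancel hβ.ne', Real.rpow_one]

/-- The bandwidth `ε_n` balances noise and bias: `√(n ε_n) ρ_n = √(log (e n))`. -/
lemma sqrt_mul_epsn {β : ℝ} (hβ : 0 < β) {n : ℕ} (hn : 1 ≤ n) :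
    Real.sqrt (n * epsn β n) * rhon β n = Real.sqrt (Real.log (Real.exp 1 * n)) := by
  have h1 := one_le_log_exp_mul hn
  have hn' : (1 : ℝ) ≤ n := by exact_mod_cast hn
  have hX : 0 < Real.log (Real.exp 1 * n) / n := by positivity
  have hE := epsn_pos (β := β) hn
  rw [← Real.sqrt_sq (rhon_pos (β := β) hn).le, ← Real.sqrt_mul (by positivity)]
  congr 1
  rw [epsn_eq hβ hn, rhon, ← Real.rpow_mul_natCast hX.le, mul_assoc, ← Real.rpow_add hX]
  have : 1 / (2 * β + 1) + β / (2 * β + 1) * ((2 : ℕ) : ℝ) = 1 := by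
    push_cast; field_simp; ring
  rw [this, Real.rpow_one]
  field_simp

lemma gam_le {β : ℝ} (hβ : 0 < β) {d : ℝ} (hd : 0 ≤ d) : ∃ K : ℝ, 0 ≤ K ∧ ∀ n : ℕ, 1 ≤ n →
    Gam (d * epsn β n) ≤ K * Real.sqrt (Real.log (Real.exp 1 * n)) := by
  rcases hd.eq_or_lt with rfl | hd
  · exact ⟨0, le_rfl, fun n _ => by simp [Gam]⟩
  refine ⟨Real.sqrt (2 * (1 + |Real.log d|)), Real.sqrt_nonneg _, fun n hn => ?_⟩
  have h1 := one_le_log_exp_mul hn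
  have hn' : (1 : ℝ) ≤ n := by exact_mod_cast hn
  have hl := Real.log_nonneg hn'
  have hE := epsn_pos (β := β) hn
  rw [Gam, ← Real.sqrt_mul (by positivity)]
  refine Real.sqrt_le_sqrt ?_
  rw [mul_assoc]
  refine mul_le_mul_of_nonneg_left ?_ zero_le_two
  rw [Real.log_div (Real.exp_pos 1).ne' (by positivity), Real.log_exp,
    Real.log_mul hd.ne' hE.ne']
  -- `ε_n ≥ n ^ (-1 / (2β + 1)) ≥ 1 / n`
  have hle : -Real.log n ≤ Real.log (epsn β n) := by
    rw [epsn_eq hβ hn, Real.log_rpow (by positivity), Real.log_div (by positivity) (by positivity)]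
    have hr0 : 0 ≤ 1 / (2 * β + 1) := by positivity
    have hr : 1 / (2 * β + 1) ≤ 1 := by rw [div_le_one (by positivity)]; linarith
    nlinarith [mul_nonneg hr0 (Real.log_nonneg h1), mul_nonneg (sub_nonneg.mpr hr) hl]
  have h2 : Real.log (Real.exp 1 * n) = 1 + Real.log n := by
    rw [Real.log_mul (Real.exp_pos 1).ne' (by positivity), Real.log_exp]
  rw [h2]
  nlinarith [neg_abs_le (Real.log d), mul_nonneg (abs_nonneg (Real.log d)) hl]

/-! ### The one-sided bound and the band -/

/-- At a suitable bandwidth `h`, the estimator plus its penalty exceeds `f t` by at most the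
optimal rate. This bounds `uband` from above, and `lband` from below after negating `f` and `v`. -/
lemma one_sided_bound {β L : ℝ} (hβ : 0 < β) (hL : 0 < L) {a b : ℝ} (ha : 0 ≤ a) (hb : 0 ≤ b)
    {ψ : ℝ → ℝ} (hBV : BoundedVariationOn ψ univ)
    (hs : ∀ x, x ∉ Set.Icc (-a) b → ψ x = 0) (hp : 0 < ∫ x, ψ x)
    (hmom : 1 < β → ∫ x, ψ x * x = 0) :
    ∃ Δ : ℝ, 0 ≤ Δ ∧ ∀ f, HolderClass β L f → ∀ n : ℕ, 1 ≤ n → ∀ κ : ℝ, 0 ≤ κ →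
      ∀ v : ℝ → ℝ → ℝ, ∀ T : ℝ, 0 ≤ T →
      (∀ h t : ℝ, 0 < h → a * h ≤ t → t ≤ 1 - b * h →
        v h t / (Real.sqrt h * Real.sqrt (∫ x, (ψ x)^2)) - Gam ((a + b) * h) ≤ T) →
      ∀ t ∈ Set.Icc (epsn β n) (1 - epsn β n), ∃ h : ℝ, (0 < h ∧ a * h ≤ t ∧ t ≤ 1 - b * h) ∧
        fhat n f ψ v h t + Real.sqrt (∫ x, (ψ x)^2) * (Gam ((a + b) * h) + κ) /
          ((∫ x, ψ x) * Real.sqrt (n * h)) ≤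
        f t + Δ * rhon β n * (1 + (κ + T) / Real.sqrt (Real.log (Real.exp 1 * n))) := by
  obtain ⟨C, hC, hbias⟩ := kernel_bias hβ hL ha hb hs (integrable_of_integral_pos hp) hmom
  have hN := Real.sqrt_pos.mpr (integral_sq_pos hBV hs hp)
  set P := ∫ x, ψ x with hP
  set N := Real.sqrt (∫ x, (ψ x)^2) with hNdef
  set c : ℝ := 1 / (a + b + 1) with hc
  have hc0 : 0 < c := by positivity
  have hac : a * c ≤ 1 := by rw [hc, mul_one_div, div_le_one (by positivity)]; linarith
  have hbc : b * c ≤ 1 := by rw [hc, mul_one_div, div_le_one (by positivity)]; linarith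
  obtain ⟨K, hK, hGam⟩ := gam_le hβ (d := (a + b) * c) (by positivity)
  refine ⟨C * c ^ β / P + (2 * K + 1) * (N / (P * Real.sqrt c)), by positivity, ?_⟩
  intro f hf n hn κ hκ v T hT hv t ht
  have hE := epsn_pos (β := β) hn
  have hR := rhon_pos (β := β) hn
  have hn' : (1 : ℝ) ≤ n := by exact_mod_cast hn
  have hS : 0 < Real.sqrt (Real.log (Real.exp 1 * n)) :=
    Real.sqrt_pos.mpr (by linarith [one_le_log_exp_mul hn])
  have hbal := sqrt_mul_epsn hβ hn
  set S := Real.sqrt (Real.log (Real.exp 1 * n)) with hSdef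
  have hh : 0 < c * epsn β n := by positivity
  have h1 : a * (c * epsn β n) ≤ t := by nlinarith [ht.1]
  have h2 : t ≤ 1 - b * (c * epsn β n) := by nlinarith [ht.2]
  refine ⟨c * epsn β n, ⟨hh, h1, h2⟩, ?_⟩
  have hB := hbias f hf _ t hh h1 h2
  have hV := hv _ t hh h1 h2
  have hG := hGam n hn
  rw [mul_assoc] at hG
  have hpow : (c * epsn β n) ^ β = c ^ β * rhon β n := by
    rw [Real.mul_rpow hc0.le hE.le, epsn_rpow hβ hn]
  have hq : Real.sqrt (n * (c * epsn β n)) = Real.sqrt c * S / rhon β n := by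
    rw [← hbal, mul_left_comm, Real.sqrt_mul hc0.le]
    field_simp
  rw [hpow] at hB
  set h := c * epsn β n with hhdef
  set g := Gam ((a + b) * h) with hg
  have hsh := Real.sqrt_pos.mpr hh
  have hsn : 0 < Real.sqrt n := Real.sqrt_pos.mpr (by linarith)
  have hV' : v h t ≤ (g + T) * (Real.sqrt h * N) := by
    rw [← div_le_iff₀ (by positivity)]
    linarith
  have hsplit : Real.sqrt (n * h) = Real.sqrt n * Real.sqrt h := Real.sqrt_mul (by positivity) _
  have hfh : fhat n f ψ v h t ≤ f t + C * c ^ β / P * rhon β n +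
      N / (P * Real.sqrt (n * h)) * (g + T) := by
    rw [fhat, ← hP, div_le_iff₀ (by positivity)]
    have e : (f t + C * c ^ β / P * rhon β n + N / (P * Real.sqrt (n * h)) * (g + T)) *
        (Real.sqrt n * h * P) = Real.sqrt n * (h * (f t * P) + h * (C * (c ^ β * rhon β n))) +
        (g + T) * (Real.sqrt h * N) := by
      rw [hsplit]
      have hss := Real.sq_sqrt hh.le
      field_simp
      linear_combination (-N * (g + T)) * hss
    rw [e]
    exact add_le_add (mul_le_mul_of_nonneg_left hB hsn.le) hV'
  have hD : N / (P * Real.sqrt (n * h)) = N / (P * Real.sqrt c) * (rhon β n / S) := by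
    rw [hq]
    field_simp
  have hpen : N * (g + κ) / (P * Real.sqrt (n * h)) =
      N / (P * Real.sqrt c) * (rhon β n / S) * (g + κ) := by
    rw [← hD]; ring
  rw [hD] at hfh
  rw [hpen]
  set M := N / (P * Real.sqrt c) with hM
  have hM0 : 0 < M := by positivity
  have hA0 : 0 ≤ C * c ^ β / P := by positivity
  set A := C * c ^ β / P with hA
  have hsum : M * (rhon β n / S) * (2 * g + T + κ) ≤
      M * rhon β n * (2 * K + (κ + T) / S) := by
    have e : M * rhon β n * (2 * K + (κ + T) / S) =
        M * (rhon β n / S) * (2 * (K * S) + T + κ) := by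
      field_simp
      ring
    rw [e]
    exact mul_le_mul_of_nonneg_left (by linarith) (by positivity)
  have hq0 : 0 ≤ (κ + T) / S := by positivity
  have hfin : A * rhon β n + M * rhon β n * (2 * K + (κ + T) / S) ≤
      (A + (2 * K + 1) * M) * rhon β n * (1 + (κ + T) / S) := by
    have e : (A + (2 * K + 1) * M) * rhon β n * (1 + (κ + T) / S) =
        A * rhon β n + M * rhon β n * (2 * K + (κ + T) / S) +
        (A * rhon β n * ((κ + T) / S) + M * rhon β n +
          2 * K * (M * rhon β n) * ((κ + T) / S)) := by ring
    rw [e]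
    have : 0 ≤ A * rhon β n * ((κ + T) / S) + M * rhon β n +
          2 * K * (M * rhon β n) * ((κ + T) / S) := by positivity
    linarith
  linarith

lemma fhat_neg (n : ℕ) (f ψ : ℝ → ℝ) (v : ℝ → ℝ → ℝ) (h t : ℝ) :
    fhat n (fun x => -f x) ψ (fun h t => -v h t) h t = -fhat n f ψ v h t := by
  simp only [fhat, mul_neg, integral_neg]
  ring

/-- Theorem `Optimal Rates`: if `f ∈ G ∩ H_{β,L}` — with
`G = G_↑` and `β ≤ 1`, or `G = G_conv` and `1 ≤ β ≤ 2` — then the multiscale band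
built from kernels `ψ^(ℓ), ψ^(u)` (of bounded variation, compactly supported, with
`⟨1,ψ⟩ > 0` and the one-sided bias property relative to `G`) satisfies, for some
constant `Δ` depending only on `(β, L)` and `(ψ^(ℓ), ψ^(u))`, surely (pathwise in
the noise, represented by the integrals `v^(ℓ), v^(u)` and any bounds
`T(-ψ^(ℓ)) ≤ Tl`, `T(ψ^(u)) ≤ Tu` on the multiscale statistics):
`û(t) - ℓ̂(t) ≤ Δ ρ_n (1 + (κ_α + Tu + Tl)/√(log(en)))` on `[ε_n, 1 - ε_n]`. -/
theorem stmt4 (β L : ℝ) (hβ : 0 < β) (hL : 0 < L)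
    (G : Set (ℝ → ℝ))
    (hG : (G = {g : ℝ → ℝ | Monotone g} ∧ β ≤ 1) ∨
          (G = {g : ℝ → ℝ | ConvexOn ℝ univ g} ∧ 1 ≤ β ∧ β ≤ 2))
    (al bl au bu : ℝ) (hal : 0 ≤ al) (hbl : 0 ≤ bl) (hau : 0 ≤ au) (hbu : 0 ≤ bu)
    (ψl ψu : ℝ → ℝ)
    (hBVl : BoundedVariationOn ψl univ) (hBVu : BoundedVariationOn ψu univ)
    (hsuppl : ∀ x : ℝ, x ∉ Set.Icc (-al) bl → ψl x = 0)
    (hsuppu : ∀ x : ℝ, x ∉ Set.Icc (-au) bu → ψu x = 0)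
    (hposl : 0 < ∫ x, ψl x) (hposu : 0 < ∫ x, ψu x)
    (hbiasl : ∀ g ∈ G, IntegrableOn g (Set.Icc (-al) bl) →
      ∫ x, g x * ψl x ≤ g 0 * ∫ x, ψl x)
    (hbiasu : ∀ g ∈ G, IntegrableOn g (Set.Icc (-au) bu) →
      g 0 * ∫ x, ψu x ≤ ∫ x, g x * ψu x) :
    ∃ Δ : ℝ, ∀ f : ℝ → ℝ, f ∈ G → HolderClass β L f →
      ∀ n : ℕ, 1 ≤ n → ∀ κ : ℝ, 0 ≤ κ →
      ∀ vl vu : ℝ → ℝ → ℝ, ∀ Tl Tu : ℝ, 0 ≤ Tl → 0 ≤ Tu →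
      (∀ h t : ℝ, 0 < h → al * h ≤ t → t ≤ 1 - bl * h →
        -(vl h t) / (Real.sqrt h * Real.sqrt (∫ x, (ψl x)^2)) -
          Gam ((al + bl) * h) ≤ Tl) →
      (∀ h t : ℝ, 0 < h → au * h ≤ t → t ≤ 1 - bu * h →
        vu h t / (Real.sqrt h * Real.sqrt (∫ x, (ψu x)^2)) -
          Gam ((au + bu) * h) ≤ Tu) →
      ∀ t ∈ Set.Icc (epsn β n) (1 - epsn β n),
        uband n f ψu au bu κ vu t - lband n f ψl al bl κ vl t ≤
          ((Δ * rhon β n *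
            (1 + (κ + Tu + Tl) / Real.sqrt (Real.log (Real.exp 1 * n))) : ℝ) : EReal) := by
  have hmom : 1 < β → (∫ x, ψl x * x = 0) ∧ ∫ x, ψu x * x = 0 := by
    intro h1
    rcases hG with ⟨-, h⟩ | ⟨rfl, -, -⟩
    · exact absurd h (not_le.mpr h1)
    have hid : (fun x : ℝ => x) ∈ {g : ℝ → ℝ | ConvexOn ℝ univ g} := convexOn_id convex_univ
    have hneg : (fun x : ℝ => -x) ∈ {g : ℝ → ℝ | ConvexOn ℝ univ g} :=
      (concaveOn_id convex_univ).neg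
    have l1 := hbiasl _ hid (continuous_id.integrableOn_Icc)
    have l2 := hbiasl _ hneg (continuous_neg.integrableOn_Icc)
    have u1 := hbiasu _ hid (continuous_id.integrableOn_Icc)
    have u2 := hbiasu _ hneg (continuous_neg.integrableOn_Icc)
    simp only [neg_mul, integral_neg, zero_mul, neg_zero] at l1 l2 u1 u2
    simp_rw [mul_comm (ψl _), mul_comm (ψu _)]
    exact ⟨by linarith, by linarith⟩
  obtain ⟨Δl, hΔl, Hl⟩ := one_sided_bound hβ hL hal hbl hBVl hsuppl hposl fun h => (hmom h).1
  obtain ⟨Δu, hΔu, Hu⟩ := one_sided_bound hβ hL hau hbu hBVu hsuppu hposu fun h => (hmom h).2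
  refine ⟨Δu + Δl, fun f _ hf n hn κ hκ vl vu Tl Tu hTl hTu hvl hvu t ht => ?_⟩
  obtain ⟨h, hh, hle⟩ := Hu f hf n hn κ hκ vu Tu hTu hvu t ht
  obtain ⟨h', hh', hle'⟩ := Hl _ hf.neg n hn κ hκ (fun h t => -vl h t) Tl hTl hvl t ht
  rw [fhat_neg] at hle'
  have hup := iInf_le (fun p : {h : ℝ // 0 < h ∧ au * h ≤ t ∧ t ≤ 1 - bu * h} =>
    ((fhat n f ψu vu (p : ℝ) t +
      Real.sqrt (∫ x, (ψu x)^2) * (Gam ((au + bu) * (p : ℝ)) + κ) /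
        ((∫ x, ψu x) * Real.sqrt (n * (p : ℝ))) : ℝ) : EReal)) ⟨h, hh⟩
  have hlo := le_iSup (fun p : {h : ℝ // 0 < h ∧ al * h ≤ t ∧ t ≤ 1 - bl * h} =>
    ((fhat n f ψl vl (p : ℝ) t -
      Real.sqrt (∫ x, (ψl x)^2) * (Gam ((al + bl) * (p : ℝ)) + κ) /
        ((∫ x, ψl x) * Real.sqrt (n * (p : ℝ))) : ℝ) : EReal)) ⟨h', hh'⟩
  refine (EReal.sub_le_sub hup hlo).trans ?_
  rw [← EReal.coe_sub, EReal.coe_le_coe_iff]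
  have hR := rhon_pos (β := β) hn
  have hS := Real.sqrt_nonneg (Real.log (Real.exp 1 * n))
  set S := Real.sqrt (Real.log (Real.exp 1 * n))
  -- the two sides carry `κ + Tu` and `κ + Tl`; both are at most `κ + Tu + Tl`
  have b1 : Δu * rhon β n * (1 + (κ + Tu) / S) ≤ Δu * rhon β n * (1 + (κ + Tu + Tl) / S) := by
    have : κ + Tu ≤ κ + Tu + Tl := by linarith
    gcongr
  have b2 : Δl * rhon β n * (1 + (κ + Tl) / S) ≤ Δl * rhon β n * (1 + (κ + Tu + Tl) / S) := by
    have : κ + Tl ≤ κ + Tu + Tl := by linarith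
    gcongr
  dsimp only at hle hle' ⊢
  linarith
end

section
/- Let μ be a measure on ℝ which is finite on bounded intervals, let a, b ≥ 0, and let ψ : ℝ → ℝ be bounded with ψ = 0 outside [−a,b] and ∫ ψ dμ ≥ 0. Suppose ∫ x⁺ ψ(x) μ(dx) = 0 and ∫ x⁻ ψ(x) μ(dx) = 0 (where x⁺ := max(x,0), x⁻ := max(−x,0)), and that there exist numbers c < 0 < d with ψ ≥ 0 on [c,d], ψ ≤ 0 on ℝ∖[c,d], μ([−a,c]) > 0 and μ([d,b]) > 0. Then for every convex function g : ℝ → (−∞,∞] with ∫_{[−a,b]} |g| dμ < ∞: ∫ g ψ dμ ≤ g(0) ∫ ψ dμ. -/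
/-!
The proof compares `g` with the function `h x = g 0 + α x⁺ + β x⁻`, where `α` and `β` are chosen so
that `h` agrees with `g` at `c`, `0` and `d`. Convexity on each half-line gives `g ≤ h` on `[c, d]`
and `g ≥ h` off `[c, d]`, which is the sign pattern of `ψ`; hence `g ψ ≤ h ψ` almost everywhere, and
`∫ h ψ = g 0 ∫ ψ` because both one-sided moments of `ψ` vanish.

The values `g c`, `g 0`, `g d` are finite: since `[-a, c]` and `[d, b]` have positive measure and `g`
is finite almost everywhere on `[-a, b]`, there are points `x₁ ≤ c` and `x₂ ≥ d` at which `g` is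
finite, and convexity propagates finiteness to `[x₁, x₂]`.
-/

open MeasureTheory Set

/-- Convexity for extended-real-valued functions `ℝ → (-∞, ∞]`. -/
def ERealConvex (g : ℝ → EReal) : Prop :=
  (∀ x, g x ≠ ⊥) ∧
  ∀ x y : ℝ, ∀ l : ℝ, 0 ≤ l → l ≤ 1 →
    g (l * x + (1 - l) * y) ≤ (l : EReal) * g x + ((1 - l : ℝ) : EReal) * g y

/-- Convexity of the real part: finiteness at the two endpoints gives finiteness in between. -/
lemma ERealConvex.toReal_le {g : ℝ → EReal} (hg : ERealConvex g) {x y l : ℝ}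
    (hx : g x ≠ ⊤) (hy : g y ≠ ⊤) (h0 : 0 ≤ l) (h1 : l ≤ 1) :
    g (l * x + (1 - l) * y) ≠ ⊤ ∧
      (g (l * x + (1 - l) * y)).toReal ≤ l * (g x).toReal + (1 - l) * (g y).toReal := by
  have h := hg.2 x y l h0 h1
  rw [← EReal.coe_toReal hx (hg.1 x), ← EReal.coe_toReal hy (hg.1 y), ← EReal.coe_mul,
    ← EReal.coe_mul, ← EReal.coe_add] at h
  have ht : g (l * x + (1 - l) * y) ≠ ⊤ := ne_top_of_le_ne_top (EReal.coe_ne_top _) h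
  refine ⟨ht, ?_⟩
  rw [← EReal.coe_toReal ht (hg.1 _)] at h
  exact_mod_cast h

/-- If `r` lies between `0` and `s`, then `g r` is finite and lies below the chord from `0` to `s`.
The condition on `r` is written `r / s ∈ [0, 1]` so that it covers both signs of `s`. -/
lemma ERealConvex.chord {g : ℝ → EReal} (hg : ERealConvex g) {r s : ℝ}
    (hs : g s ≠ ⊤) (h0 : g 0 ≠ ⊤) (hs0 : s ≠ 0) (hr0 : 0 ≤ r / s) (hr1 : r / s ≤ 1) :
    g r ≠ ⊤ ∧ (g r).toReal ≤ (r / s) * (g s).toReal + (1 - r / s) * (g 0).toReal := by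
  have h := hg.toReal_le hs h0 hr0 hr1
  rwa [mul_zero, add_zero, div_mul_cancel₀ r hs0] at h

lemma integrable_mul_of_support {μ : Measure ℝ} {p q M : ℝ} {f ψ : ℝ → ℝ}
    (hψ : Measurable ψ) (hM : ∀ x, |ψ x| ≤ M) (hsupp : ∀ x, x ∉ Icc p q → ψ x = 0)
    (hf : IntegrableOn f (Icc p q) μ) : Integrable (fun x => f x * ψ x) μ := by
  have h : IntegrableOn (fun x => f x * ψ x) (Icc p q) μ :=
    Integrable.mul_bdd (c := M) hf hψ.aestronglyMeasurable (Filter.Eventually.of_forall hM)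
  refine h.integrable_of_forall_notMem_eq_zero fun x hx => ?_
  simp [hsupp x hx]

/-- A property that holds almost everywhere on `s` holds somewhere on any non-null `t ⊆ s`. -/
lemma exists_mem_of_ae_restrict {μ : Measure ℝ} {s t : Set ℝ} {P : ℝ → Prop}
    (hP : ∀ᵐ x ∂μ.restrict s, P x) (hts : t ⊆ s) (ht : 0 < μ t) : ∃ x ∈ t, P x := by
  by_contra! h
  refine ht.ne' ?_
  rw [← Measure.restrict_eq_self μ hts]
  exact measure_mono_null (fun x hx => h x hx) hP

/-- one-sided bias inequality (Lemma `Ortho`, convex case, signed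
kernel): if the bounded kernel `ψ` vanishes outside `[-a, b]`, has `∫ ψ dμ ≥ 0`,
satisfies `∫ x⁺ ψ dμ = ∫ x⁻ ψ dμ = 0`, and `ψ ≥ 0` on `[c, d]`, `ψ ≤ 0` off
`[c, d]` for some `c < 0 < d` with `μ([-a, c]) > 0` and `μ([d, b]) > 0`, then
`∫ g ψ dμ ≤ g(0) ∫ ψ dμ` for every convex `g : ℝ → (-∞, ∞]` with
`∫_{[-a,b]} |g| dμ < ∞` (the latter expressed via a.e. finiteness and
integrability of the real part; `∫ g ψ dμ` is represented by
`∫ (g x).toReal * ψ x dμ`). -/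
theorem stmt11
    (μ : Measure ℝ) (hμfin : ∀ p q : ℝ, μ (Icc p q) < ⊤)
    (a b : ℝ) (ha : 0 ≤ a) (hb : 0 ≤ b)
    (ψ : ℝ → ℝ) (hψmeas : Measurable ψ) (hψbdd : ∃ M : ℝ, ∀ x, |ψ x| ≤ M)
    (hψsupp : ∀ x, x ∉ Icc (-a) b → ψ x = 0)
    (hψint : 0 ≤ ∫ x, ψ x ∂μ)
    (hmomp : ∫ x, max x 0 * ψ x ∂μ = 0)
    (hmomm : ∫ x, max (-x) 0 * ψ x ∂μ = 0)
    (c d : ℝ) (hc : c < 0) (hd : 0 < d)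
    (hψpos : ∀ x ∈ Icc c d, 0 ≤ ψ x)
    (hψneg : ∀ x, x ∉ Icc c d → ψ x ≤ 0)
    (hμc : 0 < μ (Icc (-a) c)) (hμd : 0 < μ (Icc d b)) :
    ∀ g : ℝ → EReal, ERealConvex g → Measurable g →
      (∀ᵐ x ∂μ.restrict (Icc (-a) b), g x ≠ ⊤) →
      IntegrableOn (fun x => (g x).toReal) (Icc (-a) b) μ →
      ((∫ x, (g x).toReal * ψ x ∂μ : ℝ) : EReal) ≤ g 0 * ((∫ x, ψ x ∂μ : ℝ) : EReal) := by
  intro g hg _ hfin hgint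
  obtain ⟨M, hM⟩ := hψbdd
  have hloc : IsLocallyFiniteMeasure μ :=
    ⟨fun x => ⟨Icc (x - 1) (x + 1), Icc_mem_nhds (by linarith) (by linarith), hμfin _ _⟩⟩
  -- `-a ≤ c` and `d ≤ b`, since the corresponding intervals are not null.
  have hac : -a ≤ c := by
    by_contra h
    simp [Icc_eq_empty h] at hμc
  have hdb : d ≤ b := by
    by_contra h
    simp [Icc_eq_empty h] at hμd
  obtain ⟨x₁, hx₁, hgx₁⟩ := exists_mem_of_ae_restrict hfin
    (Icc_subset_Icc le_rfl (by linarith)) hμc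
  obtain ⟨x₂, hx₂, hgx₂⟩ := exists_mem_of_ae_restrict hfin
    (Icc_subset_Icc (by linarith) le_rfl) hμd
  have hx₁0 : x₁ < 0 := hx₁.2.trans_lt hc
  have hx₂0 : 0 < x₂ := hd.trans_le hx₂.1
  have hg0 : g 0 ≠ ⊤ := by
    have hpos : 0 < x₂ - x₁ := by linarith
    have h := (hg.toReal_le (l := x₂ / (x₂ - x₁)) hgx₁ hgx₂ (by positivity)
      (by rw [div_le_one hpos]; linarith)).1
    have e : x₂ / (x₂ - x₁) * x₁ + (1 - x₂ / (x₂ - x₁)) * x₂ = 0 := by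
      field_simp
      ring
    rwa [e] at h
  have hgd : g d ≠ ⊤ :=
    (hg.chord hgx₂ hg0 hx₂0.ne' (by positivity) ((div_le_one hx₂0).2 hx₂.1)).1
  have hgc : g c ≠ ⊤ :=
    (hg.chord hgx₁ hg0 hx₁0.ne (div_nonneg_of_nonpos hc.le hx₁0.le)
      ((div_le_one_of_neg hx₁0).2 hx₁.2)).1
  set G : ℝ → ℝ := fun x => (g x).toReal with hG
  set α : ℝ := (G d - G 0) / d with hα
  set β : ℝ := (G c - G 0) / (-c) with hβ
  have hin : ∀ x ∈ Icc c d, G x ≤ G 0 + α * max x 0 + β * max (-x) 0 := by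
    intro x hx
    rcases le_total 0 x with h | h
    · rw [max_eq_left h, max_eq_right (by linarith)]
      have := (hg.chord hgd hg0 hd.ne' (by positivity) ((div_le_one hd).2 hx.2)).2
      calc G x ≤ _ := this
        _ = _ := by simp only [hα, hG]; field_simp; ring
    · rw [max_eq_right h, max_eq_left (by linarith)]
      have := (hg.chord hgc hg0 hc.ne (div_nonneg_of_nonpos h hc.le)
        ((div_le_one_of_neg hc).2 hx.1)).2
      have hc' := hc.ne
      calc G x ≤ _ := this
        _ = _ := by simp only [hβ, hG]; field_simp; ring
  have hout : ∀ x, x ∉ Icc c d → g x ≠ ⊤ →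
      G 0 + α * max x 0 + β * max (-x) 0 ≤ G x := by
    intro x hx hgx
    rcases le_total 0 x with h | h
    · have hdx : d < x := by
        by_contra h'
        exact hx ⟨by linarith, by linarith⟩
      have hx0 : 0 < x := hd.trans hdx
      rw [max_eq_left h, max_eq_right (by linarith)]
      have key : G d ≤ d / x * G x + (1 - d / x) * G 0 :=
        (hg.chord hgx hg0 hx0.ne' (by positivity) ((div_le_one hx0).2 hdx.le)).2
      calc _ ≤ G 0 + (d / x * G x + (1 - d / x) * G 0 - G 0) / d * x + β * 0 := by
            rw [hα]; gcongr
        _ = G x := by field_simp; ring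
    · have hcx : x < c := by
        by_contra h'
        exact hx ⟨by linarith, by linarith⟩
      have hx0 : x < 0 := hcx.trans hc
      rw [max_eq_right h, max_eq_left (by linarith)]
      have key : G c ≤ c / x * G x + (1 - c / x) * G 0 :=
        (hg.chord hgx hg0 hx0.ne (div_nonneg_of_nonpos hc.le hx0.le)
          ((div_le_one_of_neg hx0).2 hcx.le)).2
      have hnc : 0 ≤ -c := by linarith
      have hnx : 0 ≤ -x := by linarith
      have hc' := hc.ne
      have hx' := hx0.ne
      calc _ ≤ G 0 + α * 0 + (c / x * G x + (1 - c / x) * G 0 - G 0) / (-c) * (-x) := by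
            rw [hβ]; gcongr
        _ = G x := by field_simp; ring
  have hae : ∀ᵐ x ∂μ, G x * ψ x ≤
      G 0 * ψ x + α * (max x 0 * ψ x) + β * (max (-x) 0 * ψ x) := by
    rw [ae_restrict_iff' measurableSet_Icc] at hfin
    filter_upwards [hfin] with x hx
    have e : G 0 * ψ x + α * (max x 0 * ψ x) + β * (max (-x) 0 * ψ x) =
      (G 0 + α * max x 0 + β * max (-x) 0) * ψ x := by ring
    rw [e]
    by_cases hab : x ∈ Icc (-a) b
    · by_cases hcd : x ∈ Icc c d
      · exact mul_le_mul_of_nonneg_right (hin x hcd) (hψpos x hcd)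
      · exact mul_le_mul_of_nonpos_right (hout x hcd (hx hab)) (hψneg x hcd)
    · simp [hψsupp x hab]
  have hi : ∀ f : ℝ → ℝ, IntegrableOn f (Icc (-a) b) μ → Integrable (fun x => f x * ψ x) μ :=
    fun f hf => integrable_mul_of_support hψmeas hM hψsupp hf
  have i0 : Integrable (fun x => G 0 * ψ x) μ :=
    hi (fun _ => G 0) (continuous_const.continuousOn.integrableOn_Icc)
  have i1 : Integrable (fun x => α * (max x 0 * ψ x)) μ :=
    (hi (fun x => max x 0)
      (Continuous.continuousOn (by fun_prop)).integrableOn_Icc).const_mul α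
  have i2 : Integrable (fun x => β * (max (-x) 0 * ψ x)) μ :=
    (hi (fun x => max (-x) 0)
      (Continuous.continuousOn (by fun_prop)).integrableOn_Icc).const_mul β
  have i01 : Integrable (fun x => G 0 * ψ x + α * (max x 0 * ψ x)) μ := i0.add i1
  have hmain : ∫ x, G x * ψ x ∂μ ≤ G 0 * ∫ x, ψ x ∂μ := by
    calc ∫ x, G x * ψ x ∂μ
        ≤ ∫ x, (G 0 * ψ x + α * (max x 0 * ψ x) + β * (max (-x) 0 * ψ x)) ∂μ :=
          integral_mono_ae (hi G hgint) (i01.add i2) hae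
      _ = G 0 * ∫ x, ψ x ∂μ := by
          rw [integral_add i01 i2, integral_add i0 i1, integral_const_mul,
            integral_const_mul, integral_const_mul, hmomp, hmomm]
          ring
  rw [← EReal.coe_toReal hg0 (hg.1 0), ← EReal.coe_mul]
  exact EReal.coe_le_coe_iff.2 hmain
end

section
/- Let μ be a measure on ℝ which is finite on bounded intervals, with ⟨g,h⟩ := ∫ g h dμ and ‖g‖ := ⟨g,g⟩^{1/2}. Let G_o := {g ∈ G_↑ : g(0) ≤ −1} and G_A := {g ∈ G_↑ ∩ H_{1,1} : g(0) ≥ 0}, and define G_A(x) := x, G_o(x) := −1 for x ∈ [−1,0] and G_o(x) := x otherwise, so that ψ := G_A − G_o = 1{x ∈ [−1,0]}(1+x). Then: (i) ‖G_o − G_A‖ = inf{‖g_o − g_A‖ : g_o ∈ G_o, g_A ∈ G_A}; (ii) ⟨1,ψ⟩ ≥ ‖ψ‖²; (iii) ⟨g,ψ⟩ ≤ g(0) ⟨1,ψ⟩ for every nondecreasing g : ℝ → [−∞,∞] with ∫_{[−1,0]}|g| dμ < ∞; (iv) ⟨g,ψ⟩ ≥ ‖ψ‖² − ⟨1,ψ⟩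 for every g ∈ H_{1,1} with g(0) ≥ 0 and ∫_{[−1,0]}|g| dμ < ∞. -/
/-!
On `[-1,0]`, every feasible pair satisfies `g_A(x) ≥ g_A(0) - |x| ≥ x` (Lipschitz bound) and
`g_o(x) ≤ g_o(0) ≤ -1` (monotonicity), hence `g_A - g_o ≥ 1 + x = ψ(x) ≥ 0` there; off `[-1,0]`
the function `ψ` vanishes. So `(G_o, G_A)` minimizes the distance pointwise, which is (i).
The other three parts also come from pointwise inequalities, using `0 ≤ ψ ≤ 1` and that `ψ` is
supported in `[-1,0]`: `ψ² ≤ ψ` for (ii), `g ψ ≤ g(0) ψ` for (iii), and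
`g ψ ≥ x ψ = (ψ - 1) ψ` for (iv). In (iii) an infinite `g(0)` is treated separately: if
`g(0) = -∞` then `g = -∞` on `[-1,0]`, which forces `μ[-1,0] = 0`, and if `g(0) = +∞` the
inequality is trivial unless `∫ ψ dμ = 0`, in which case `ψ = 0` almost everywhere.
-/

open MeasureTheory Set
open scoped ENNReal

/-- `G_A(x) = x`. -/
noncomputable def GAiso (x : ℝ) : ℝ := x

/-- `G_o = -1` on `[-1,0]`, `G_o(x) = x` otherwise. -/
noncomputable def GOiso (x : ℝ) : ℝ := if x ∈ Icc (-1 : ℝ) 0 then -1 else x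

/-- `ψ = G_A - G_o = 1_{[-1,0]}(1+x)`. -/
noncomputable def psiIso (x : ℝ) : ℝ := GAiso x - GOiso x

/-- squared `L²(μ)`-distance, in `ℝ≥0∞`, between an extended-real-valued and a
real-valued function. -/
noncomputable def eDist2 (μ : Measure ℝ) (go : ℝ → EReal) (ga : ℝ → ℝ) : ℝ≥0∞ :=
  ∫⁻ x, (((ga x : EReal) - go x).abs) ^ (2 : ℕ) ∂μ

lemma psiIso_of_mem {x : ℝ} (hx : x ∈ Icc (-1 : ℝ) 0) : psiIso x = 1 + x := by
  simp only [psiIso, GAiso, GOiso, if_pos hx]; ring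

lemma psiIso_of_notMem {x : ℝ} (hx : x ∉ Icc (-1 : ℝ) 0) : psiIso x = 0 := by
  simp only [psiIso, GAiso, GOiso, if_neg hx]; ring

lemma psiIso_nonneg (x : ℝ) : 0 ≤ psiIso x := by
  by_cases hx : x ∈ Icc (-1 : ℝ) 0
  · rw [psiIso_of_mem hx]; linarith [hx.1]
  · rw [psiIso_of_notMem hx]

lemma psiIso_le_one (x : ℝ) : psiIso x ≤ 1 := by
  by_cases hx : x ∈ Icc (-1 : ℝ) 0
  · rw [psiIso_of_mem hx]; linarith [hx.2]
  · rw [psiIso_of_notMem hx]; norm_num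

lemma integrable_mul_psiIso {μ : Measure ℝ} {h : ℝ → ℝ}
    (hh : IntegrableOn h (Icc (-1 : ℝ) 0) μ) : Integrable (fun x => h x * psiIso x) μ := by
  have h1 : IntegrableOn (fun x => h x * (1 + x)) (Icc (-1 : ℝ) 0) μ :=
    hh.mul_continuousOn (by fun_prop) isCompact_Icc
  refine ((integrable_indicator_iff measurableSet_Icc).2 h1).congr (ae_of_all _ fun x => ?_)
  by_cases hx : x ∈ Icc (-1 : ℝ) 0
  · simp only [indicator_of_mem hx, psiIso_of_mem hx]
  · simp only [indicator_of_notMem hx, psiIso_of_notMem hx, mul_zero]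

lemma integrable_psiIso {μ : Measure ℝ} (hμ : ∀ p q : ℝ, μ (Icc p q) < ⊤) :
    Integrable psiIso μ := by
  have h1 : IntegrableOn (fun _ : ℝ => (1 : ℝ)) (Icc (-1 : ℝ) 0) μ :=
    integrableOn_const (hμ _ _).ne
  simpa using integrable_mul_psiIso h1

lemma integrable_psiIso_sq {μ : Measure ℝ} (hμ : ∀ p q : ℝ, μ (Icc p q) < ⊤) :
    Integrable (fun x => (psiIso x) ^ 2) μ := by
  simpa only [sq] using integrable_mul_psiIso (integrable_psiIso hμ).integrableOn

lemma monotone_GOiso : Monotone GOiso := by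
  intro x y hxy
  unfold GOiso
  simp only [mem_Icc]
  split_ifs with h1 h2 h2
  · exact le_rfl
  · linarith [h1.1]
  · by_contra! h
    exact h1 ⟨h.le, hxy.trans h2.2⟩
  · exact hxy

/-- A 1-Lipschitz function that is nonnegative at `0` dominates the identity on `(-∞, 0]`. -/
lemma le_of_lipschitz {g : ℝ → ℝ} (hL : ∀ x y : ℝ, |g x - g y| ≤ |x - y|) (h0 : 0 ≤ g 0)
    {x : ℝ} (hx : x ≤ 0) : x ≤ g x := by
  have h1 := (abs_le.1 (hL x 0)).1
  rw [sub_zero, abs_of_nonpos hx] at h1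
  linarith

/-- The pointwise bound `(G_A - G_o)² ≤ (g_A - g_o)²` behind the minimality in (i). -/
lemma abs_sub_sq_le {go : ℝ → EReal} {ga : ℝ → ℝ} (hgo : Monotone go)
    (ho : go 0 ≤ ((-1 : ℝ) : EReal)) (hL : ∀ x y : ℝ, |ga x - ga y| ≤ |x - y|)
    (h0 : 0 ≤ ga 0) (x : ℝ) :
    (((GAiso x : EReal) - (GOiso x : EReal)).abs) ^ 2 ≤ (((ga x : EReal) - go x).abs) ^ 2 := by
  gcongr
  rw [← EReal.coe_sub, EReal.abs_def]
  change ENNReal.ofReal |psiIso x| ≤ _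
  by_cases hx : x ∈ Icc (-1 : ℝ) 0
  · have hg := le_of_lipschitz hL h0 hx.2
    have hgx : go x ≤ ((-1 : ℝ) : EReal) := (hgo hx.2).trans ho
    rw [abs_of_nonneg (psiIso_nonneg x), psiIso_of_mem hx]
    generalize go x = e at hgx
    induction e with
    | bot => simp
    | top => simp
    | coe r =>
      rw [← EReal.coe_sub, EReal.abs_def]
      have hr : r ≤ -1 := EReal.coe_le_coe_iff.1 hgx
      exact ENNReal.ofReal_le_ofReal (le_trans (by linarith) (le_abs_self _))
  · simp [psiIso_of_notMem hx]

/-- The bias inequality (iii). -/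
lemma bias_le {μ : Measure ℝ} (hμ : ∀ p q : ℝ, μ (Icc p q) < ⊤) {g : ℝ → EReal}
    (hg : Monotone g) (hfin : ∀ᵐ x ∂μ.restrict (Icc (-1 : ℝ) 0), g x ≠ ⊤ ∧ g x ≠ ⊥)
    (hint : IntegrableOn (fun x => (g x).toReal) (Icc (-1 : ℝ) 0) μ) :
    ((∫ x, (g x).toReal * psiIso x ∂μ : ℝ) : EReal) ≤
      g 0 * ((∫ x, psiIso x ∂μ : ℝ) : EReal) := by
  have hfin' := (ae_restrict_iff' measurableSet_Icc).1 hfin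
  have hnn : 0 ≤ ∫ x, psiIso x ∂μ := integral_nonneg psiIso_nonneg
  rcases hnn.eq_or_lt with hz | hpos
  · -- `ψ = 0` almost everywhere, so both sides vanish even if `g 0` is infinite
    have hae : psiIso =ᵐ[μ] 0 :=
      (integral_eq_zero_iff_of_nonneg psiIso_nonneg (integrable_psiIso hμ)).1 hz.symm
    have h1 : ∫ x, (g x).toReal * psiIso x ∂μ = 0 := by
      refine integral_eq_zero_of_ae ?_
      filter_upwards [hae] with x hx
      simp [hx]
    simp [h1, ← hz]
  · rcases eq_or_ne (g 0) ⊤ with ht | ht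
    · rw [ht, EReal.top_mul_coe_of_pos hpos]
      exact le_top
    rcases eq_or_ne (g 0) ⊥ with hb | hb
    · -- `g = ⊥` on `[-1,0]`, so `[-1,0]` is a null set, contradicting `0 < ∫ ψ`
      exfalso
      have : ∫ x, psiIso x ∂μ = 0 := by
        refine integral_eq_zero_of_ae ?_
        filter_upwards [hfin'] with x hx
        by_cases hm : x ∈ Icc (-1 : ℝ) 0
        · exact absurd (le_bot_iff.1 (hb ▸ hg hm.2)) (hx hm).2
        · exact psiIso_of_notMem hm
      linarith
    rw [← EReal.coe_toReal ht hb, ← EReal.coe_mul, EReal.coe_le_coe_iff, ← integral_const_mul]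
    refine integral_mono_ae (integrable_mul_psiIso hint) ((integrable_psiIso hμ).const_mul _) ?_
    filter_upwards [hfin'] with x hx
    by_cases hm : x ∈ Icc (-1 : ℝ) 0
    · exact mul_le_mul_of_nonneg_right (EReal.toReal_le_toReal (hg hm.2) (hx hm).2 ht)
        (psiIso_nonneg x)
    · simp [psiIso_of_notMem hm]

/-- Theorem `OptimizationL`, isotonic case: with
`G_o := {g ∈ G_↑ : g(0) ≤ -1}` (extended-real-valued nondecreasing functions) and
`G_A := {g ∈ G_↑ ∩ H_{1,1} : g(0) ≥ 0}`, the pair `(G_o, G_A)` above minimizes the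
`L²(μ)`-distance, and `ψ := G_A - G_o` satisfies `⟨1,ψ⟩ ≥ ‖ψ‖²`, the one-sided
bias inequality (iii), and the lower bound (iv) on `H_{1,1}`. -/
theorem stmt12 (μ : Measure ℝ) (hμfin : ∀ p q : ℝ, μ (Icc p q) < ⊤) :
    -- (i) minimal L²(μ)-distance (stated via the squared extended distance)
    ((eDist2 μ (fun x => (GOiso x : EReal)) GAiso) ^ ((1:ℝ)/2) =
      ⨅ p : {q : (ℝ → EReal) × (ℝ → ℝ) //
          Monotone q.1 ∧ q.1 0 ≤ ((-1 : ℝ) : EReal) ∧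
          Monotone q.2 ∧ (∀ x y : ℝ, |q.2 x - q.2 y| ≤ |x - y|) ∧ 0 ≤ q.2 0},
        (eDist2 μ p.1.1 p.1.2) ^ ((1:ℝ)/2)) ∧
    -- (ii) ⟨1,ψ⟩ ≥ ‖ψ‖²
    ((∫ x, (psiIso x)^2 ∂μ) ≤ ∫ x, psiIso x ∂μ) ∧
    -- (iii) ⟨g,ψ⟩ ≤ g(0)⟨1,ψ⟩ for nondecreasing (extended-real-valued) g
    (∀ g : ℝ → EReal, Monotone g → Measurable g →
      (∀ᵐ x ∂μ.restrict (Icc (-1 : ℝ) 0), g x ≠ ⊤ ∧ g x ≠ ⊥) →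
      IntegrableOn (fun x => (g x).toReal) (Icc (-1 : ℝ) 0) μ →
      ((∫ x, (g x).toReal * psiIso x ∂μ : ℝ) : EReal) ≤
        g 0 * ((∫ x, psiIso x ∂μ : ℝ) : EReal)) ∧
    -- (iv) ⟨g,ψ⟩ ≥ ‖ψ‖² - ⟨1,ψ⟩ for g ∈ H_{1,1} with g(0) ≥ 0
    (∀ g : ℝ → ℝ, (∀ x y : ℝ, |g x - g y| ≤ |x - y|) → 0 ≤ g 0 →
      IntegrableOn g (Icc (-1 : ℝ) 0) μ →
      (∫ x, (psiIso x)^2 ∂μ) - (∫ x, psiIso x ∂μ) ≤ ∫ x, g x * psiIso x ∂μ) := by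
  refine ⟨le_antisymm (le_iInf ?_) ?_, ?_, fun g hg _ hfin hint => bias_le hμfin hg hfin hint, ?_⟩
  · rintro ⟨⟨go, ga⟩, h1, h2, -, h4, h5⟩
    exact ENNReal.rpow_le_rpow (lintegral_mono fun x => abs_sub_sq_le h1 h2 h4 h5 x) (by norm_num)
  · -- `(G_o, G_A)` is itself a feasible pair
    refine iInf_le_of_le ⟨(fun x => (GOiso x : EReal), GAiso), ?_, ?_, ?_, ?_, ?_⟩ le_rfl
    · exact fun x y hxy => EReal.coe_le_coe_iff.2 (monotone_GOiso hxy)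
    · simp [GOiso]
    · exact fun x y hxy => hxy
    · exact fun x y => le_rfl
    · exact le_rfl
  · refine integral_mono (integrable_psiIso_sq hμfin) (integrable_psiIso hμfin) fun x => ?_
    have h0 := psiIso_nonneg x
    have h1 := psiIso_le_one x
    change psiIso x ^ 2 ≤ psiIso x
    nlinarith
  · intro g hL h0 hint
    rw [← integral_sub (integrable_psiIso_sq hμfin) (integrable_psiIso hμfin)]
    refine integral_mono ((integrable_psiIso_sq hμfin).sub (integrable_psiIso hμfin))
      (integrable_mul_psiIso hint) fun x => ?_
    change psiIso x ^ 2 - psiIso x ≤ g x * psiIso x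
    by_cases hm : x ∈ Icc (-1 : ℝ) 0
    · have h1 := le_of_lipschitz hL h0 hm.2
      have h2 := psiIso_nonneg x
      have h3 := psiIso_of_mem hm
      calc psiIso x ^ 2 - psiIso x = x * psiIso x := by rw [h3]; ring
        _ ≤ g x * psiIso x := mul_le_mul_of_nonneg_right h1 h2
    · simp [psiIso_of_notMem hm]
end

section
/- Let μ be a measure on ℝ which is finite on bounded intervals and satisfies μ((−∞,0)) > 0 and μ((0,∞)) > 0, with ⟨g,h⟩ := ∫ g h dμ and ‖g‖ := ⟨g,g⟩^{1/2}. Let G_o := {g ∈ G_conv : g(0) ≥ 1} and G_A := {g ∈ G_conv ∩ H_{2,1} : g(0) ≤ 0}. Define G_A(x) := x²/2 and, for a real number c, G_o(x) := 1 + cx for x ∈ [−a,b] and G_o(x) := G_A(x) otherwise, where a := −c + (c²+2)^{1/2} and b := c + (c²+2)^{1/2}. Then there exists c such that ∫ x (G_o − G_A)(x) μ(dx) = 0 (for μ Lebesgue measure, c = 0, a = b = 2^{1/2}), and for such c, with ψ := G_o − G_A: (i) ‖G_o − G_A‖ = inf{‖g_o − g_A‖ : g_o ∈ G_o, g_A ∈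 G_A}; (ii) ⟨1,ψ⟩ ≥ ‖ψ‖²; (iii) ⟨g,ψ⟩ ≥ g(0) ⟨1,ψ⟩ for every convex g : ℝ → (−∞,∞] with ∫_{[−a,b]}|g| dμ < ∞; (iv) ⟨g,ψ⟩ ≤ ⟨1,ψ⟩ − ‖ψ‖² for every g ∈ H_{2,1} with g(0) ≤ 0 and ∫_{[−a,b]}|g| dμ < ∞. -/
/-!
Since `-a` and `b` are the roots of `1 + c x - x² / 2`, one has `ψ(x) = max 0 (1 + c x - x² / 2)`:
a nonnegative continuous function with compact support (`psi_eq`).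

The first moment `c ↦ ∫ x ψ_c dμ` is continuous (`continuous_moment`), nonnegative for large `c` and
nonpositive for very negative `c` (`exists_moment_nonneg`, `exists_moment_nonpos`), so it has a zero.

Once `∫ x ψ dμ = 0`, affine terms vanishing at `0` can be discarded when pairing with `ψ`. A convex
`g` lies above a supporting line at `0` (`exists_support`), which gives (iii); if there is no such
line because `g = ∞` on one side of `0`, then finiteness almost everywhere on `[-a, b]` and the
moment condition force `ψ` to be concentrated at `0`. A function with 1-Lipschitz derivative lies
below its tangent line at `0` plus `x² / 2` (`le_quadratic`), which together with
`∫ (x² / 2) ψ = ⟨1, ψ⟩ - ‖ψ‖²` (`integral_sq_half`) gives (iv); nonnegativity of the left side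
gives (ii). Combining both one-sided bounds gives the pointwise inequality
`(g_o - g_A)² ≥ ψ² + k x ψ` for a constant `k`, whose integral is the optimality in (i)
(`eDist2_ge`); this route needs no measurability of `g_o`.
-/


open MeasureTheory Set
open scoped ENNReal

/-- `G_A(x) = x²/2`. -/
noncomputable def GAconv (x : ℝ) : ℝ := x^2 / 2

/-- `a = -c + (c² + 2)^{1/2}`. -/
noncomputable def aOf (c : ℝ) : ℝ := -c + Real.sqrt (c^2 + 2)

/-- `b = c + (c² + 2)^{1/2}`. -/
noncomputable def bOf (c : ℝ) : ℝ := c + Real.sqrt (c^2 + 2)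

/-- `G_o(x) = 1 + c x` on `[-a, b]`, `= x²/2` off it. -/
noncomputable def GOconvU (c x : ℝ) : ℝ :=
  if x ∈ Icc (-aOf c) (bOf c) then 1 + c * x else x^2 / 2

/-- `ψ = G_o - G_A`. -/
noncomputable def psiConvU (c x : ℝ) : ℝ := GOconvU c x - GAconv x

/-! ### The function `ψ` as a positive part -/

lemma psi_eq (c x : ℝ) : psiConvU c x = max 0 (1 + c * x - x ^ 2 / 2) := by
  have hs : (Real.sqrt (c ^ 2 + 2)) ^ 2 = c ^ 2 + 2 := Real.sq_sqrt (by positivity)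
  have hs0 : 0 ≤ Real.sqrt (c ^ 2 + 2) := Real.sqrt_nonneg _
  unfold psiConvU GOconvU GAconv aOf bOf
  generalize Real.sqrt (c ^ 2 + 2) = s at hs hs0
  -- `1 + c x - x² / 2 = (s² - (x - c)²) / 2`, which is nonnegative exactly on `[c - s, c + s]`
  have key : 1 + c * x - x ^ 2 / 2 = (s - (x - c)) * (s + (x - c)) / 2 := by nlinarith
  split_ifs with h
  · have := mul_nonneg (a := s - (x - c)) (b := s + (x - c)) (by linarith [h.2]) (by linarith [h.1])
    rw [max_eq_right (by linarith)]
  · rw [key, max_eq_left]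
    · ring
    · by_contra! hc
      apply h
      have h1 : (x - c) ^ 2 ≤ s ^ 2 := by nlinarith
      have h2 := abs_le_of_sq_le_sq' h1 hs0
      exact ⟨by linarith [h2.1], by linarith [h2.2]⟩

lemma psi_nonneg (c x : ℝ) : 0 ≤ psiConvU c x := by
  rw [psi_eq]; exact le_max_left _ _

lemma psi_continuous (c : ℝ) : Continuous (psiConvU c) := by
  have : psiConvU c = fun x => max 0 (1 + c * x - x ^ 2 / 2) := funext (psi_eq c)
  rw [this]; fun_prop

lemma psi_eq_zero_of_notMem {c x : ℝ} (h : x ∉ Icc (-aOf c) (bOf c)) : psiConvU c x = 0 := by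
  simp [psiConvU, GOconvU, GAconv, h]

lemma psi_hasCompactSupport (c : ℝ) : HasCompactSupport (psiConvU c) :=
  HasCompactSupport.intro isCompact_Icc fun _ h => psi_eq_zero_of_notMem h

/-- On its support `ψ` agrees with the quadratic `1 + c x - x² / 2`. -/
lemma psi_mul_self (c x : ℝ) :
    psiConvU c x * psiConvU c x = psiConvU c x * (1 + c * x - x ^ 2 / 2) := by
  rw [psi_eq]
  rcases le_total 0 (1 + c * x - x ^ 2 / 2) with h | h
  · rw [max_eq_right h]
  · rw [max_eq_left h]; ring

lemma psi_neg (c x : ℝ) : psiConvU c (-x) = psiConvU (-c) x := by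
  rw [psi_eq, psi_eq]; ring_nf

lemma isFiniteMeasureOnCompacts_of_Icc {μ : Measure ℝ} (h : ∀ p q : ℝ, μ (Icc p q) < ⊤) :
    IsFiniteMeasureOnCompacts μ := by
  refine ⟨fun K hK => ?_⟩
  obtain ⟨p, hp⟩ := hK.bddBelow
  obtain ⟨q, hq⟩ := hK.bddAbove
  have hsub : K ⊆ Icc p q := fun x hx => ⟨hp hx, hq hx⟩
  exact (measure_mono hsub).trans_lt (h p q)

lemma integrable_mul_psi (μ : Measure ℝ) [IsFiniteMeasureOnCompacts μ] {f : ℝ → ℝ}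
    (hf : Continuous f) (c : ℝ) : Integrable (fun x => f x * psiConvU c x) μ :=
  (hf.mul (psi_continuous c)).integrable_of_hasCompactSupport
    ((psi_hasCompactSupport c).mul_left)

lemma integrable_psi (μ : Measure ℝ) [IsFiniteMeasureOnCompacts μ] (c : ℝ) :
    Integrable (psiConvU c) μ :=
  (psi_continuous c).integrable_of_hasCompactSupport (psi_hasCompactSupport c)

/-! ### Existence of a centred `c` -/

lemma continuous_moment (μ : Measure ℝ) [IsFiniteMeasureOnCompacts μ] :
    Continuous fun c => ∫ x, x * psiConvU c x ∂μ := by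
  rw [continuous_iff_continuousAt]
  intro c₀
  -- For `|c| ≤ C`, `ψ_c(x) ≤ ψ_C(|x|) ≤ ψ_C(x) + ψ_{-C}(x)`.
  set C := |c₀| + 1 with hC
  refine continuousAt_of_dominated
    (bound := fun x => |x| * psiConvU C x + |x| * psiConvU (-C) x) ?_ ?_ ?_ ?_
  · exact Filter.Eventually.of_forall fun c => (integrable_mul_psi μ continuous_id c).aestronglyMeasurable
  · filter_upwards [Metric.ball_mem_nhds c₀ one_pos] with c hc
    refine Filter.Eventually.of_forall fun x => ?_
    have hc' : |c| ≤ C := by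
      rw [Metric.mem_ball, Real.dist_eq] at hc
      have := abs_sub_abs_le_abs_sub c c₀
      linarith
    rw [norm_mul, Real.norm_eq_abs, Real.norm_eq_abs, abs_of_nonneg (psi_nonneg c x), ← mul_add]
    refine mul_le_mul_of_nonneg_left ?_ (abs_nonneg x)
    have h := abs_le.1 hc'
    rcases le_total 0 x with hx | hx
    · have : psiConvU c x ≤ psiConvU C x := by
        rw [psi_eq, psi_eq]
        exact max_le_max_left _ (by nlinarith)
      linarith [psi_nonneg (-C) x]
    · have : psiConvU c x ≤ psiConvU (-C) x := by
        rw [psi_eq, psi_eq]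
        exact max_le_max_left _ (by nlinarith)
      linarith [psi_nonneg C x]
  · exact (integrable_mul_psi μ continuous_abs _).add (integrable_mul_psi μ continuous_abs _)
  · refine Filter.Eventually.of_forall fun x => ?_
    simp only [psi_eq]
    fun_prop

/-- For large `c` the mass of `ψ_c` on the negative axis lies in `[-1 / c, 0]`, so its first moment
there is `O(1 / c)`, while `ψ_c ≥ 1` on any given compact subset of `(0, ∞)`. -/
lemma exists_moment_nonneg (μ : Measure ℝ) (hμfin : ∀ p q : ℝ, μ (Icc p q) < ⊤)
    (hμpos : 0 < μ (Ioi (0 : ℝ))) : ∃ c : ℝ, 0 ≤ ∫ x, x * psiConvU c x ∂μ := by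
  have := isFiniteMeasureOnCompacts_of_Icc hμfin
  obtain ⟨n, hn⟩ : ∃ n : ℕ, 0 < μ (Icc (1 / ((n : ℝ) + 1)) (n : ℝ)) := by
    by_contra! h
    have hz : μ (⋃ n : ℕ, Icc (1 / ((n : ℝ) + 1)) (n : ℝ)) = 0 :=
      measure_iUnion_null fun n => le_antisymm (h n) bot_le
    refine hμpos.ne' (measure_mono_null (fun x hx => ?_) hz)
    rw [mem_Ioi] at hx
    obtain ⟨k, hk⟩ := exists_nat_one_div_lt hx
    obtain ⟨m, hm⟩ := exists_nat_ge x
    refine mem_iUnion.2 ⟨max k m, ?_, ?_⟩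
    · refine le_trans ?_ hk.le
      exact Nat.one_div_le_one_div (le_max_left _ _)
    · exact hm.trans (by exact_mod_cast le_max_right k m)
  set δ : ℝ := 1 / ((n : ℝ) + 1) with hδ
  have hδ0 : 0 < δ := by positivity
  set m := μ.real (Icc δ n) with hm
  have hm0 : 0 < m := ENNReal.toReal_pos hn.ne' (hμfin _ _).ne
  set K := μ.real (Icc (-1) 0) with hK
  have hK0 : 0 ≤ K := measureReal_nonneg
  set c : ℝ := 1 + n + K / (δ * m) with hc
  have hq : 0 ≤ K / (δ * m) := by positivity
  have hc1 : 1 ≤ c := by have : (0 : ℝ) ≤ n := by positivity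
                         linarith
  have hc0 : 0 < c := by linarith
  refine ⟨c, ?_⟩
  have hi1 : Integrable ((Icc δ (n : ℝ)).indicator fun _ => δ) μ :=
    (integrable_indicator_iff measurableSet_Icc).2 (integrableOn_const (hμfin _ _).ne)
  have hi2 : Integrable ((Icc (-1 : ℝ) 0).indicator fun _ => 1 / c) μ :=
    (integrable_indicator_iff measurableSet_Icc).2 (integrableOn_const (hμfin _ _).ne)
  have hle : ∫ x, ((Icc δ (n : ℝ)).indicator (fun _ => δ) x
      - (Icc (-1 : ℝ) 0).indicator (fun _ => 1 / c) x) ∂μ ≤ ∫ x, x * psiConvU c x ∂μ := by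
    refine integral_mono (hi1.sub hi2) (integrable_mul_psi μ continuous_id c) fun x => ?_
    show _ ≤ x * psiConvU c x
    have hind : 0 ≤ (Icc (-1 : ℝ) 0).indicator (fun _ => 1 / c) x :=
      indicator_nonneg (fun _ _ => by positivity) x
    rcases lt_or_ge x 0 with hx | hx
    · have h1 : x ∉ Icc δ (n : ℝ) := fun h => by linarith [h.1]
      rw [indicator_of_notMem h1]
      by_cases hxc : 1 + c * x ≤ 0
      · have : psiConvU c x = 0 := by
          rw [psi_eq]; exact max_eq_left (by nlinarith)
        rw [this]; linarith
      · push Not at hxc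
        have hx1 : -(1 / c) ≤ x := by
          have : c * (1 / c) = 1 := by field_simp
          nlinarith
        have hc2 : 1 / c ≤ 1 := by rw [div_le_one hc0]; exact hc1
        have hmem : x ∈ Icc (-1 : ℝ) 0 := ⟨by linarith, hx.le⟩
        rw [indicator_of_mem hmem]
        have hp : psiConvU c x ≤ 1 := by
          rw [psi_eq]; exact max_le zero_le_one (by nlinarith)
        nlinarith [psi_nonneg c x]
    · have h0 : 0 ≤ x * psiConvU c x := mul_nonneg hx (psi_nonneg c x)
      by_cases hmem : x ∈ Icc δ (n : ℝ)
      · rw [indicator_of_mem hmem]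
        have hp : 1 ≤ psiConvU c x := by
          rw [psi_eq]
          refine le_trans ?_ (le_max_right _ _)
          have : x ≤ c := by linarith [hmem.2]
          nlinarith
        have := hmem.1
        nlinarith
      · rw [indicator_of_notMem hmem]; linarith
  refine le_trans ?_ hle
  rw [integral_sub hi1 hi2, integral_indicator_const _ measurableSet_Icc,
    integral_indicator_const _ measurableSet_Icc, ← hm, ← hK, smul_eq_mul, smul_eq_mul]
  have h1 : K / (δ * m) ≤ c := by have : (0 : ℝ) ≤ n := by positivity
                                  linarith
  rw [div_le_iff₀ (by positivity)] at h1
  have : K * (1 / c) ≤ m * δ := by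
    rw [mul_one_div, div_le_iff₀ hc0]; linarith
  linarith

/-- The mirror image of `exists_moment_nonneg`, by reflecting `μ`. -/
lemma exists_moment_nonpos (μ : Measure ℝ) (hμfin : ∀ p q : ℝ, μ (Icc p q) < ⊤)
    (hμneg : 0 < μ (Iio (0 : ℝ))) : ∃ c : ℝ, ∫ x, x * psiConvU c x ∂μ ≤ 0 := by
  have hmap : ∀ s, (μ.map Neg.neg) s = μ (Neg.neg ⁻¹' s) :=
    fun s => (MeasurableEquiv.neg ℝ).map_apply s
  obtain ⟨c, hc⟩ := exists_moment_nonneg (μ.map Neg.neg)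
    (fun p q => by rw [hmap]; simpa using hμfin (-q) (-p)) (by rw [hmap]; simpa using hμneg)
  refine ⟨-c, ?_⟩
  have h := (MeasurableEquiv.neg ℝ).measurableEmbedding.integral_map (μ := μ)
    (fun x => x * psiConvU c x)
  change ∫ x, x * psiConvU c x ∂(μ.map Neg.neg) = ∫ x, -x * psiConvU c (-x) ∂μ at h
  rw [h] at hc
  simp only [psi_neg, neg_mul, integral_neg] at hc
  linarith

/-! ### Taylor bound and supporting lines at `0` -/

/-- A second-order Taylor bound for functions with 1-Lipschitz derivative. -/
lemma le_quadratic {g g' : ℝ → ℝ} (hg : ∀ x, HasDerivAt g (g' x) x)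
    (hL : ∀ x y, |g' x - g' y| ≤ |x - y|) (x : ℝ) :
    g x ≤ g 0 + g' 0 * x + x ^ 2 / 2 := by
  have hd : ∀ y, HasDerivAt (fun y => g 0 + g' 0 * y + y ^ 2 / 2 - g y)
      (g' 0 + y - g' y) y := by
    intro y
    have h1 := (((hasDerivAt_id y).const_mul (g' 0)).const_add (g 0)).add
      (((hasDerivAt_id y).pow 2).div_const 2)
    refine (h1.sub (hg y)).congr_deriv ?_
    simp
  have hcont : Continuous (fun y => g 0 + g' 0 * y + y ^ 2 / 2 - g y) :=
    continuous_iff_continuousAt.2 fun y => (hd y).continuousAt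
  rcases le_total 0 x with hx | hx
  · have := monotoneOn_of_deriv_nonneg (convex_Ici (0 : ℝ)) hcont.continuousOn
      (fun y _ => (hd y).differentiableAt.differentiableWithinAt) (fun y hy => by
        rw [(hd y).deriv]
        rw [interior_Ici, mem_Ioi] at hy
        have := hL y 0
        rw [sub_zero, abs_of_pos hy] at this
        linarith [le_abs_self (g' y - g' 0)]) self_mem_Ici hx hx
    simp at this
    linarith
  · have := antitoneOn_of_deriv_nonpos (convex_Iic (0 : ℝ)) hcont.continuousOn
      (fun y _ => (hd y).differentiableAt.differentiableWithinAt) (fun y hy => by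
        rw [(hd y).deriv]
        rw [interior_Iic, mem_Iio] at hy
        have := hL y 0
        rw [sub_zero, abs_of_neg hy] at this
        linarith [neg_abs_le (g' y - g' 0)]) hx self_mem_Iic hx
    simp at this
    linarith

/-- A convex function with finite values on both sides of `0` is finite at `0` and has a supporting
line there; the two exceptional alternatives are the cases where `0` is not interior to the
effective domain. -/
lemma exists_support {g : ℝ → EReal} (hg : ERealConvex g) :
    (∀ x < 0, g x = ⊤) ∨ (∀ x > 0, g x = ⊤) ∨
      ∃ s r : ℝ, g 0 = r ∧ ∀ x, ((r + s * x : ℝ) : EReal) ≤ g x := by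
  by_cases h1 : ∀ x < 0, g x = ⊤
  · exact .inl h1
  by_cases h2 : ∀ x > 0, g x = ⊤
  · exact .inr (.inl h2)
  refine .inr (.inr ?_)
  push Not at h1 h2
  obtain ⟨x₀, hx₀, hgx₀⟩ := h1
  obtain ⟨y₀, hy₀, hgy₀⟩ := h2
  have hfin : ∀ x, g x ≠ ⊤ → g x = ((g x).toReal : EReal) := fun x hx =>
    (EReal.coe_toReal hx (hg.1 x)).symm
  -- convexity at `0 = l x + (1 - l) y` with `l = y / (y - x)`
  have key : ∀ x y, x < 0 → 0 < y → g x ≠ ⊤ → g y ≠ ⊤ →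
      g 0 ≤ ((y / (y - x) * (g x).toReal + (1 - y / (y - x)) * (g y).toReal : ℝ) : EReal) := by
    intro x y hx hy hgx hgy
    have hyx : 0 < y - x := by linarith
    have h := hg.2 x y (y / (y - x)) (by positivity) (by rw [div_le_one hyx]; linarith)
    have e : y / (y - x) * x + (1 - y / (y - x)) * y = 0 := by field_simp; ring
    rw [e, hfin x hgx, hfin y hgy] at h
    exact_mod_cast h
  have h0 : g 0 ≠ ⊤ := ne_top_of_le_ne_top (EReal.coe_ne_top _) (key x₀ y₀ hx₀ hy₀ hgx₀ hgy₀)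
  set r := (g 0).toReal with hr
  have hslope : ∀ x y, x < 0 → 0 < y → g x ≠ ⊤ → g y ≠ ⊤ →
      ((g x).toReal - r) / x ≤ ((g y).toReal - r) / y := by
    intro x y hx hy hgx hgy
    have h := key x y hx hy hgx hgy
    rw [hfin 0 h0, EReal.coe_le_coe_iff, ← hr] at h
    have hyx : 0 < y - x := by linarith
    have e : y / (y - x) * (g x).toReal + (1 - y / (y - x)) * (g y).toReal
      = (y * (g x).toReal - x * (g y).toReal) / (y - x) := by field_simp; ring
    rw [e, le_div_iff₀ hyx] at h
    rw [div_le_iff_of_neg hx, div_mul_eq_mul_div, div_le_iff₀ hy]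
    linarith
  set S : Set ℝ := {z | ∃ y, 0 < y ∧ g y ≠ ⊤ ∧ z = ((g y).toReal - r) / y} with hS
  have hne : S.Nonempty := ⟨_, y₀, hy₀, hgy₀, rfl⟩
  have hbdd : BddBelow S :=
    ⟨((g x₀).toReal - r) / x₀, by rintro _ ⟨y, hy, hgy, rfl⟩; exact hslope x₀ y hx₀ hy hgx₀ hgy⟩
  refine ⟨sInf S, r, hfin 0 h0, fun x => ?_⟩
  by_cases hgx : g x = ⊤
  · rw [hgx]; exact le_top
  rw [hfin x hgx, EReal.coe_le_coe_iff]
  rcases lt_trichotomy x 0 with hx | rfl | hx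
  · have : ((g x).toReal - r) / x ≤ sInf S :=
      le_csInf hne (by rintro _ ⟨y, hy, hgy, rfl⟩; exact hslope x y hx hy hgx hgy)
    rw [div_le_iff_of_neg hx] at this
    linarith
  · simp [hr]
  · have : sInf S ≤ ((g x).toReal - r) / x := csInf_le hbdd ⟨x, hx, hgx, rfl⟩
    rw [le_div_iff₀ hx] at this
    linarith

/-! ### Optimality of the pair -/

lemma GO_eq_max (c x : ℝ) : GOconvU c x = max (x ^ 2 / 2) (1 + c * x) := by
  have h := psi_eq c x
  unfold psiConvU GAconv at h
  rw [sub_eq_iff_eq_add, ← max_add_add_right] at h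
  rw [h]; congr 1 <;> ring

lemma GO_ERealConvex (c : ℝ) : ERealConvex fun x => (GOconvU c x : EReal) := by
  refine ⟨fun x => EReal.coe_ne_bot _, fun x y l hl0 hl1 => ?_⟩
  have : GOconvU c (l * x + (1 - l) * y) ≤ l * GOconvU c x + (1 - l) * GOconvU c y := by
    have hl : 0 ≤ 1 - l := by linarith
    simp only [GO_eq_max]
    have hx1 := mul_le_mul_of_nonneg_left (le_max_left (x ^ 2 / 2) (1 + c * x)) hl0
    have hx2 := mul_le_mul_of_nonneg_left (le_max_right (x ^ 2 / 2) (1 + c * x)) hl0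
    have hy1 := mul_le_mul_of_nonneg_left (le_max_left (y ^ 2 / 2) (1 + c * y)) hl
    have hy2 := mul_le_mul_of_nonneg_left (le_max_right (y ^ 2 / 2) (1 + c * y)) hl
    refine max_le ?_ (by linarith)
    nlinarith [mul_nonneg (mul_nonneg hl0 hl) (sq_nonneg (x - y))]
  beta_reduce
  exact_mod_cast this

lemma abs_sq_coe (u v : ℝ) :
    (((u : EReal) - (v : EReal)).abs) ^ 2 = ENNReal.ofReal ((v - u) ^ 2) := by
  rw [← EReal.coe_sub, EReal.abs_def, ← ENNReal.ofReal_pow (abs_nonneg _), sq_abs]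
  congr 1; ring

/-- The squared distance is infinite once `g_o = ∞` on a set of positive measure. -/
lemma eDist2_eq_top {μ : Measure ℝ} {go : ℝ → EReal} {ga : ℝ → ℝ} {s : Set ℝ}
    (hs : MeasurableSet s) (hμ : 0 < μ s) (h : ∀ x ∈ s, go x = ⊤) : eDist2 μ go ga = ⊤ := by
  refine top_unique ?_
  calc ⊤ = ∫⁻ _ in s, ⊤ ∂μ := by
        rw [setLIntegral_const, ENNReal.top_mul hμ.ne']
    _ ≤ ∫⁻ x in s, (((ga x : EReal) - go x).abs) ^ 2 ∂μ :=
        setLIntegral_mono' hs fun x hx => by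
          rw [h x hx, EReal.sub_top, EReal.abs_bot]; simp
    _ ≤ eDist2 μ go ga := setLIntegral_le_lintegral _ _

lemma ofReal_integral_le {μ : Measure ℝ} {f : ℝ → ℝ} (hf : Integrable f μ) :
    ENNReal.ofReal (∫ x, f x ∂μ) ≤ ∫⁻ x, ENNReal.ofReal (f x) ∂μ := by
  have hp : Integrable (fun x => max (f x) 0) μ := hf.pos_part
  calc ENNReal.ofReal (∫ x, f x ∂μ) ≤ ENNReal.ofReal (∫ x, max (f x) 0 ∂μ) :=
        ENNReal.ofReal_le_ofReal (integral_mono hf hp fun x => le_max_left _ _)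
    _ = ∫⁻ x, ENNReal.ofReal (f x) ∂μ := by
        rw [ofReal_integral_eq_lintegral_ofReal hp (.of_forall fun x => le_max_right _ _)]
        simp

/-- Optimality. A supporting line of `g_o` at `0` and the Taylor bound on `g_A` give
`g_o - g_A ≥ 1 + d x - x² / 2` for some `d`, hence the tangent-line bound
`(g_o - g_A)² ≥ ψ² + 2 ψ (g_o - g_A - ψ) ≥ ψ² + 2 (d - c) x ψ`,
whose last term integrates to `0`. -/
lemma eDist2_ge (μ : Measure ℝ) [IsFiniteMeasureOnCompacts μ]
    (hμneg : 0 < μ (Iio (0 : ℝ))) (hμpos : 0 < μ (Ioi (0 : ℝ))) {c : ℝ}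
    (hc : ∫ x, x * psiConvU c x ∂μ = 0) {go : ℝ → EReal} {ga ga' : ℝ → ℝ}
    (hgo : ERealConvex go) (hgo0 : ((1 : ℝ) : EReal) ≤ go 0)
    (hga : ∀ x, HasDerivAt ga (ga' x) x) (hL : ∀ x y, |ga' x - ga' y| ≤ |x - y|)
    (hga0 : ga 0 ≤ 0) :
    eDist2 μ (fun x => (GOconvU c x : EReal)) GAconv ≤ eDist2 μ go ga := by
  rcases exists_support hgo with h | h | ⟨s, r, hr, h⟩
  · rw [eDist2_eq_top (go := go) measurableSet_Iio hμneg h]; exact le_top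
  · rw [eDist2_eq_top (go := go) measurableSet_Ioi hμpos h]; exact le_top
  have hr1 : 1 ≤ r := by rw [hr] at hgo0; exact_mod_cast hgo0
  set d := s - ga' 0 with hd
  have hsq : Integrable (fun x => psiConvU c x * psiConvU c x) μ :=
    integrable_mul_psi μ (psi_continuous c) c
  have hx : Integrable (fun x => x * psiConvU c x) μ := integrable_mul_psi μ continuous_id c
  have h1 : eDist2 μ (fun x => (GOconvU c x : EReal)) GAconv
      = ENNReal.ofReal (∫ x, psiConvU c x * psiConvU c x ∂μ) := by
    rw [ofReal_integral_eq_lintegral_ofReal hsq (.of_forall fun x => mul_self_nonneg _)]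
    refine lintegral_congr fun x => ?_
    rw [abs_sq_coe, ← psiConvU, sq]
  have h2 : ∫ x, psiConvU c x * psiConvU c x ∂μ
      = ∫ x, (psiConvU c x * psiConvU c x + 2 * (d - c) * (x * psiConvU c x)) ∂μ := by
    rw [integral_add hsq (hx.const_mul _), integral_const_mul, hc]; ring
  rw [h1, h2]
  refine (ofReal_integral_le (hsq.add (hx.const_mul _))).trans (lintegral_mono fun x => ?_)
  by_cases hgx : go x = ⊤
  · rw [hgx, EReal.sub_top, EReal.abs_bot]; simp
  have hx := h x
  rw [← EReal.coe_toReal hgx (hgo.1 x), EReal.coe_le_coe_iff] at hx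
  rw [← EReal.coe_toReal hgx (hgo.1 x), abs_sq_coe]
  refine ENNReal.ofReal_le_ofReal ?_
  have hq := le_quadratic hga hL x
  have hlow : 1 + d * x - x ^ 2 / 2 ≤ (go x).toReal - ga x := by rw [hd]; linarith
  have := mul_le_mul_of_nonneg_left hlow (psi_nonneg c x)
  simp only [Pi.add_apply]
  nlinarith [psi_mul_self c x, sq_nonneg ((go x).toReal - ga x - psiConvU c x)]

/-! ### Bias inequalities -/

/-- `∫ ψ (1 + c x - x² / 2) = ∫ ψ²` and `∫ x ψ = 0` give `∫ (x² / 2) ψ = ⟨1, ψ⟩ - ‖ψ‖²`. -/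
lemma integral_sq_half (μ : Measure ℝ) [IsFiniteMeasureOnCompacts μ] {c : ℝ}
    (hc : ∫ x, x * psiConvU c x ∂μ = 0) :
    ∫ x, (x ^ 2 / 2) * psiConvU c x ∂μ
      = (∫ x, psiConvU c x ∂μ) - ∫ x, (psiConvU c x) ^ 2 ∂μ := by
  have hsq : Integrable (fun x => (psiConvU c x) ^ 2) μ := by
    simpa only [sq] using integrable_mul_psi μ (psi_continuous c) c
  have hx : Integrable (fun x => x * psiConvU c x) μ := integrable_mul_psi μ continuous_id c
  rw [← integral_sub (integrable_psi μ c) hsq]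
  have : ∀ x, (x ^ 2 / 2) * psiConvU c x
      = (psiConvU c x - psiConvU c x ^ 2) + c * (x * psiConvU c x) := by
    intro x; linarith [psi_mul_self c x]
  have hd : Integrable (fun x => psiConvU c x - psiConvU c x ^ 2) μ := (integrable_psi μ c).sub hsq
  simp only [this]
  rw [integral_add hd (hx.const_mul c), integral_const_mul, hc]
  ring

/-- If `ψ` vanishes almost everywhere on one side of `0`, the moment condition makes it vanish
almost everywhere off `0`. -/
lemma ae_zero_of_one_sided {μ : Measure ℝ} [IsFiniteMeasureOnCompacts μ] {c : ℝ}
    (hc : ∫ x, x * psiConvU c x ∂μ = 0)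
    (h : (∀ᵐ x ∂μ, x < 0 → psiConvU c x = 0) ∨ (∀ᵐ x ∂μ, 0 < x → psiConvU c x = 0)) :
    ∀ᵐ x ∂μ, x ≠ 0 → psiConvU c x = 0 := by
  have hx : Integrable (fun x => x * psiConvU c x) μ := integrable_mul_psi μ continuous_id c
  have hz : (fun x => x * psiConvU c x) =ᵐ[μ] 0 := by
    rcases h with h | h
    · refine (integral_eq_zero_iff_of_nonneg_ae ?_ hx).1 hc
      filter_upwards [h] with x h
      rcases lt_or_ge x 0 with h0 | h0
      · simp [h h0]
      · exact mul_nonneg h0 (psi_nonneg c x)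
    · have hc' : ∫ x, -(x * psiConvU c x) ∂μ = 0 := by rw [integral_neg, hc, neg_zero]
      have := (integral_eq_zero_iff_of_nonneg_ae ?_ hx.neg).1 hc'
      · filter_upwards [this] with x h
        simpa using h
      filter_upwards [h] with x h
      rcases lt_or_ge 0 x with h0 | h0
      · simp [h h0]
      · simpa using mul_nonpos_of_nonpos_of_nonneg h0 (psi_nonneg c x)
  filter_upwards [hz] with x h h0
  simpa [h0] using h

lemma bias_lower (μ : Measure ℝ) [IsFiniteMeasureOnCompacts μ] {c : ℝ}
    (hc : ∫ x, x * psiConvU c x ∂μ = 0) {g : ℝ → EReal} (hg : ERealConvex g)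
    (hfin : ∀ᵐ x ∂μ.restrict (Icc (-aOf c) (bOf c)), g x ≠ ⊤)
    (hint : IntegrableOn (fun x => (g x).toReal) (Icc (-aOf c) (bOf c)) μ) :
    g 0 * ((∫ x, psiConvU c x ∂μ : ℝ) : EReal) ≤
      ((∫ x, (g x).toReal * psiConvU c x ∂μ : ℝ) : EReal) := by
  have hfin' : ∀ᵐ x ∂μ, psiConvU c x ≠ 0 → g x ≠ ⊤ := by
    filter_upwards [(ae_restrict_iff' measurableSet_Icc).1 hfin] with x h h0
    exact h (by_contra fun hn => h0 (psi_eq_zero_of_notMem hn))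
  have hx : Integrable (fun x => x * psiConvU c x) μ := integrable_mul_psi μ continuous_id c
  have hI : Integrable (fun x => (g x).toReal * psiConvU c x) μ := by
    refine (integrableOn_iff_integrable_of_support_subset (s := Icc (-aOf c) (bOf c)) ?_).1
      (hint.mul_continuousOn (psi_continuous c).continuousOn isCompact_Icc)
    intro x hxs
    by_contra hn
    exact hxs (by simp [psi_eq_zero_of_notMem hn])
  -- if `0` is not interior to the effective domain, `ψ` is concentrated at `0`
  have degenerate (hz : ∀ᵐ x ∂μ, x ≠ 0 → psiConvU c x = 0) :
      g 0 * ((∫ x, psiConvU c x ∂μ : ℝ) : EReal) ≤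
        ((∫ x, (g x).toReal * psiConvU c x ∂μ : ℝ) : EReal) := by
    have he : ∫ x, (g x).toReal * psiConvU c x ∂μ = (g 0).toReal * ∫ x, psiConvU c x ∂μ := by
      rw [← integral_const_mul]
      refine integral_congr_ae ?_
      filter_upwards [hz] with x h
      by_cases h0 : x = 0
      · rw [h0]
      · simp [h h0]
    by_cases htop : g 0 = ⊤
    · have : ∫ x, psiConvU c x ∂μ = 0 := by
        refine integral_eq_zero_of_ae ?_
        filter_upwards [hz, hfin'] with x h h'
        by_cases h0 : x = 0
        · by_contra hne
          exact h' hne (h0 ▸ htop)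
        · exact h h0
      rw [he, this]; simp
    · rw [he, EReal.coe_mul, EReal.coe_toReal htop (hg.1 0)]
  rcases exists_support hg with h | h | ⟨s, r, hr, h⟩
  · refine degenerate (ae_zero_of_one_sided hc (.inl ?_))
    filter_upwards [hfin'] with x h' hx0
    by_contra hne
    exact h' hne (h x hx0)
  · refine degenerate (ae_zero_of_one_sided hc (.inr ?_))
    filter_upwards [hfin'] with x h' hx0
    by_contra hne
    exact h' hne (h x hx0)
  · rw [hr, ← EReal.coe_mul, EReal.coe_le_coe_iff]
    have e : r * ∫ x, psiConvU c x ∂μ = ∫ x, (r * psiConvU c x + s * (x * psiConvU c x)) ∂μ := by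
      rw [integral_add ((integrable_psi μ c).const_mul r) (hx.const_mul s), integral_const_mul,
        integral_const_mul, hc]
      ring
    rw [e]
    refine integral_mono_ae (((integrable_psi μ c).const_mul r).add (hx.const_mul s)) hI ?_
    filter_upwards [hfin'] with x h'
    by_cases h0 : psiConvU c x = 0
    · simp [h0]
    have := h x
    rw [← EReal.coe_toReal (h' h0) (hg.1 x), EReal.coe_le_coe_iff] at this
    nlinarith [mul_le_mul_of_nonneg_right this (psi_nonneg c x)]

lemma bias_upper (μ : Measure ℝ) [IsFiniteMeasureOnCompacts μ] {c : ℝ}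
    (hc : ∫ x, x * psiConvU c x ∂μ = 0) {g g' : ℝ → ℝ} (hg : ∀ x, HasDerivAt g (g' x) x)
    (hL : ∀ x y, |g' x - g' y| ≤ |x - y|) (hg0 : g 0 ≤ 0) :
    ∫ x, g x * psiConvU c x ∂μ ≤
      (∫ x, psiConvU c x ∂μ) - ∫ x, (psiConvU c x) ^ 2 ∂μ := by
  have hcont : Continuous g := continuous_iff_continuousAt.2 fun y => (hg y).continuousAt
  have hx : Integrable (fun x => x * psiConvU c x) μ := integrable_mul_psi μ continuous_id c
  have hx2 : Integrable (fun x => (x ^ 2 / 2) * psiConvU c x) μ :=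
    integrable_mul_psi μ (by fun_prop) c
  have e : ∫ x, (x ^ 2 / 2) * psiConvU c x ∂μ
      = ∫ x, (g' 0 * (x * psiConvU c x) + (x ^ 2 / 2) * psiConvU c x) ∂μ := by
    rw [integral_add (hx.const_mul _) hx2, integral_const_mul, hc]; ring
  rw [← integral_sq_half μ hc, e]
  refine integral_mono (integrable_mul_psi μ hcont c) ((hx.const_mul _).add hx2) fun x => ?_
  have h : g x ≤ g' 0 * x + x ^ 2 / 2 := by linarith [le_quadratic hg hL x]
  show g x * psiConvU c x ≤ g' 0 * (x * psiConvU c x) + (x ^ 2 / 2) * psiConvU c x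
  nlinarith [mul_le_mul_of_nonneg_right h (psi_nonneg c x)]

/-- Theorem `OptimizationU`, convex case: with
`G_o := {g ∈ G_conv : g(0) ≥ 1}` (extended-real-valued convex functions) and
`G_A := {g ∈ G_conv ∩ H_{2,1} : g(0) ≤ 0}`, there exists `c` with
`∫ x (G_o - G_A) dμ = 0`, and for any such `c` the pair `(G_o, G_A)` above
minimizes the `L²(μ)`-distance, and `ψ := G_o - G_A` satisfies `⟨1,ψ⟩ ≥ ‖ψ‖²`,
the one-sided bias inequality (iii) and the upper bound (iv) on `H_{2,1}`. -/
theorem stmt15 (μ : Measure ℝ) (hμfin : ∀ p q : ℝ, μ (Icc p q) < ⊤)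
    (hμneg : 0 < μ (Iio (0:ℝ))) (hμpos : 0 < μ (Ioi (0:ℝ))) :
    (∃ c : ℝ, ∫ x, x * psiConvU c x ∂μ = 0) ∧
    ∀ c : ℝ, (∫ x, x * psiConvU c x ∂μ = 0) →
      -- (i) minimal L²(μ)-distance
      ((eDist2 μ (fun x => (GOconvU c x : EReal)) GAconv) ^ ((1:ℝ)/2) =
        ⨅ p : {q : (ℝ → EReal) × ((ℝ → ℝ) × (ℝ → ℝ)) //
            ERealConvex q.1 ∧ ((1 : ℝ) : EReal) ≤ q.1 0 ∧
            ConvexOn ℝ univ q.2.1 ∧ (∀ x : ℝ, HasDerivAt q.2.1 (q.2.2 x) x) ∧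
            (∀ x y : ℝ, |q.2.2 x - q.2.2 y| ≤ |x - y|) ∧ q.2.1 0 ≤ 0},
          (eDist2 μ p.1.1 p.1.2.1) ^ ((1:ℝ)/2)) ∧
      -- (ii) ⟨1,ψ⟩ ≥ ‖ψ‖²
      ((∫ x, (psiConvU c x)^2 ∂μ) ≤ ∫ x, psiConvU c x ∂μ) ∧
      -- (iii) ⟨g,ψ⟩ ≥ g(0)⟨1,ψ⟩ for convex (extended-real-valued) g
      (∀ g : ℝ → EReal, ERealConvex g → Measurable g →
        (∀ᵐ x ∂μ.restrict (Icc (-aOf c) (bOf c)), g x ≠ ⊤) →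
        IntegrableOn (fun x => (g x).toReal) (Icc (-aOf c) (bOf c)) μ →
        g 0 * ((∫ x, psiConvU c x ∂μ : ℝ) : EReal) ≤
          ((∫ x, (g x).toReal * psiConvU c x ∂μ : ℝ) : EReal)) ∧
      -- (iv) ⟨g,ψ⟩ ≤ ⟨1,ψ⟩ - ‖ψ‖² for g ∈ H_{2,1} with g(0) ≤ 0
      (∀ g g' : ℝ → ℝ, (∀ x : ℝ, HasDerivAt g (g' x) x) →
        (∀ x y : ℝ, |g' x - g' y| ≤ |x - y|) → g 0 ≤ 0 →
        IntegrableOn g (Icc (-aOf c) (bOf c)) μ →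
        ∫ x, g x * psiConvU c x ∂μ ≤
          (∫ x, psiConvU c x ∂μ) - ∫ x, (psiConvU c x)^2 ∂μ) := by
  have := isFiniteMeasureOnCompacts_of_Icc hμfin
  refine ⟨?_, fun c hc => ⟨?_, ?_, ?_, ?_⟩⟩
  · obtain ⟨c₁, h₁⟩ := exists_moment_nonpos μ hμfin hμneg
    obtain ⟨c₂, h₂⟩ := exists_moment_nonneg μ hμfin hμpos
    exact mem_range_of_exists_le_of_exists_ge (continuous_moment μ) ⟨c₁, h₁⟩ ⟨c₂, h₂⟩
  · refine le_antisymm (le_iInf fun p => ?_) ?_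
    · obtain ⟨⟨go, ga, ga'⟩, hgo, hgo0, -, hga, hL, hga0⟩ := p
      exact ENNReal.rpow_le_rpow (eDist2_ge μ hμneg hμpos hc hgo hgo0 hga hL hga0) (by norm_num)
    · refine iInf_le_of_le ⟨⟨fun x => (GOconvU c x : EReal), GAconv, id⟩, GO_ERealConvex c, ?_, ?_,
        ?_, fun x y => le_rfl, ?_⟩ le_rfl
      · rw [EReal.coe_le_coe_iff, GO_eq_max]; simp
      · have h : ConvexOn ℝ univ fun x : ℝ => (1 / 2 : ℝ) • x ^ 2 :=
          (even_two.convexOn_pow).smul (by norm_num)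
        refine h.congr fun x _ => ?_
        simp only [GAconv, smul_eq_mul]; ring
      · intro x
        have h := ((hasDerivAt_id x).pow 2).div_const 2
        unfold GAconv
        refine h.congr_deriv ?_
        simp
      · simp [GAconv]
  · have h := integral_sq_half μ hc
    have h0 : 0 ≤ ∫ x, (x ^ 2 / 2) * psiConvU c x ∂μ :=
      integral_nonneg fun x => mul_nonneg (by positivity) (psi_nonneg c x)
    linarith
  · exact fun g hg _ hfin hint => bias_lower μ hc hg hfin hint
  · exact fun g g' hg hL hg0 _ => bias_upper μ hc hg hL hg0
end

section
/- Let h, L > 0 and t ∈ ℝ, and for a kernel ψ put ψ_{h,t}(x) := ψ((x−t)/h). (a) Let ψ^(ℓ)(x) = 1{x∈[−1,0]}(1+x) and ψ^(u)(x) = 1{x∈[0,1]}(1−x); then ∫ψ^(ℓ) dx = ∫ψ^(u) dx = 1/2 and ∫(ψ^(ℓ))² dx = ∫(ψ^(u))² dx = 1/3, and if f : ℝ → ℝ satisfies f(y) − f(x) ≥ L(y−x) for all x < y, then the functions f − L h ψ^(ℓ)_{h,t} and f + L h ψ^(u)_{h,t} are nondecreasing. (b) Let ψ^(ℓ)(x)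 = 1{x∈[−2,2]}(1−(3/2)|x|+x²/2) and ψ^(u)(x) = 1{x∈[−√2,√2]}(1−x²/2); then ∫ψ^(ℓ) dx = 2/3, ∫(ψ^(ℓ))² dx = 8/15, ∫ψ^(u) dx = 2^{5/2}/3, ∫(ψ^(u))² dx = 2^{9/2}/15, and if f : ℝ → ℝ is absolutely continuous with a derivative f' satisfying f'(y) − f'(x) ≥ L(y−x) for all x < y, then the functions f − L h² ψ^(ℓ)_{h,t} and f + L h² ψ^(u)_{h,t} are convex. -/
/-!
The integrals are those of polynomials of degree at most four over the supports of the kernels.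

For the shape claims, put `z = (x - t) / h`. Each perturbation splits as
`f ∓ L h ψ(z) = (f - L (x - t)) + L h (z ∓ ψ(z))` in the isotonic case and
`f ∓ L h² ψ(z) = (f - L (x - t)² / 2) + L h² (z² / 2 ∓ ψ(z))` in the convex case.
Here the upper sign goes with `ψ^(ℓ)` and the lower one with `ψ^(u)`. The growth hypothesis makes the
first summand nondecreasing (`monotone_sub_linear`), respectively convex (`convexOn_sub_sq`), and
the second one has this property because of the shape of the kernel:
`z ∓ ψ(z)` equals `∓1` on the support of `ψ` and `z` off it, while
`z² / 2 - ψ^(ℓ)(z) = 3/2 |z| - 1 + (p² + p) / 2` with `p = max (|z| - 2) 0`, and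
`z² / 2 + ψ^(u)(z) = max 1 (z² / 2)`.
-/

open MeasureTheory Set

/-- Kernel `ψ^(ℓ)` for the isotonic case. -/
noncomputable def psiLiso (x : ℝ) : ℝ := if x ∈ Icc (-1 : ℝ) 0 then 1 + x else 0

/-- Kernel `ψ^(u)` for the isotonic case. -/
noncomputable def psiUiso (x : ℝ) : ℝ := if x ∈ Icc (0 : ℝ) 1 then 1 - x else 0

/-- Kernel `ψ^(ℓ)` for the convex case. -/
noncomputable def psiLconv (x : ℝ) : ℝ :=
  if x ∈ Icc (-2 : ℝ) 2 then 1 - (3/2) * |x| + x^2 / 2 else 0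

/-- Kernel `ψ^(u)` for the convex case. -/
noncomputable def psiUconv (x : ℝ) : ℝ :=
  if x ∈ Icc (-Real.sqrt 2) (Real.sqrt 2) then 1 - x^2 / 2 else 0

/-- Rescaled kernel `ψ_{h,t}(x) = ψ((x - t)/h)`. -/
noncomputable def resc (ψ : ℝ → ℝ) (h t x : ℝ) : ℝ := ψ ((x - t) / h)

/-! ### Integrals of the kernels -/

theorem integral_ite_Icc {a b : ℝ} (hab : a ≤ b) (p : ℝ → ℝ) :
    (∫ x, if x ∈ Icc a b then p x else 0) = ∫ x in a..b, p x := by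
  rw [intervalIntegral.integral_of_le hab, ← integral_Icc_eq_integral_Ioc,
    ← integral_indicator measurableSet_Icc]
  simp only [indicator_apply]

theorem integral_sq_ite_Icc {a b : ℝ} (hab : a ≤ b) (p : ℝ → ℝ) :
    (∫ x, (if x ∈ Icc a b then p x else 0) ^ 2) = ∫ x in a..b, p x ^ 2 := by
  rw [← integral_ite_Icc hab]
  congr 1
  ext x
  split_ifs <;> simp

theorem integral_quartic (a b c₀ c₁ c₂ c₃ c₄ : ℝ) {p : ℝ → ℝ}
    (hp : ∀ x, p x = c₀ + c₁ * x + c₂ * x ^ 2 + c₃ * x ^ 3 + c₄ * x ^ 4) :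
    ∫ x in a..b, p x =
      (c₀ * b + c₁ * b ^ 2 / 2 + c₂ * b ^ 3 / 3 + c₃ * b ^ 4 / 4 + c₄ * b ^ 5 / 5) -
      (c₀ * a + c₁ * a ^ 2 / 2 + c₂ * a ^ 3 / 3 + c₃ * a ^ 4 / 4 + c₄ * a ^ 5 / 5) := by
  obtain rfl : p = fun x => c₀ + c₁ * x + c₂ * x ^ 2 + c₃ * x ^ 3 + c₄ * x ^ 4 := funext hp
  refine intervalIntegral.integral_eq_sub_of_hasDerivAt
    (f := fun x => c₀ * x + c₁ * x ^ 2 / 2 + c₂ * x ^ 3 / 3 + c₃ * x ^ 4 / 4 + c₄ * x ^ 5 / 5)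
    (fun x _ => ?_) (Continuous.intervalIntegrable (by fun_prop) _ _)
  have m (c : ℝ) (n : ℕ) := ((hasDerivAt_pow n x).const_mul c).div_const (n : ℝ)
  convert (((((hasDerivAt_id x).const_mul c₀).add (m c₁ 2)).add (m c₂ 3)).add (m c₃ 4)).add
    (m c₄ 5) using 1
  · ext x
    simp [mul_div_assoc]
  · push_cast
    ring

theorem integral_even {p : ℝ → ℝ} (hc : Continuous p) (he : ∀ x, p (-x) = p x) (a : ℝ) :
    ∫ x in -a..a, p x = 2 * ∫ x in (0 : ℝ)..a, p x := by
  have h1 := intervalIntegral.integral_add_adjacent_intervals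
    (hc.intervalIntegrable (μ := volume) (-a) 0) (hc.intervalIntegrable (μ := volume) 0 a)
  have h2 := intervalIntegral.integral_comp_neg (a := 0) (b := a) p
  simp only [he, neg_zero] at h2
  linarith

theorem integral_psiLiso : (∫ x, psiLiso x) = 1 / 2 := by
  unfold psiLiso
  rw [integral_ite_Icc (by norm_num), integral_quartic _ _ 1 1 0 0 0 (fun x => by ring)]
  norm_num

theorem integral_psiUiso : (∫ x, psiUiso x) = 1 / 2 := by
  unfold psiUiso
  rw [integral_ite_Icc (by norm_num), integral_quartic _ _ 1 (-1) 0 0 0 (fun x => by ring)]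
  norm_num

theorem integral_psiLiso_sq : (∫ x, (psiLiso x) ^ 2) = 1 / 3 := by
  unfold psiLiso
  rw [integral_sq_ite_Icc (by norm_num), integral_quartic _ _ 1 2 1 0 0 (fun x => by ring)]
  norm_num

theorem integral_psiUiso_sq : (∫ x, (psiUiso x) ^ 2) = 1 / 3 := by
  unfold psiUiso
  rw [integral_sq_ite_Icc (by norm_num), integral_quartic _ _ 1 (-2) 1 0 0 (fun x => by ring)]
  norm_num

theorem integral_psiLconv : (∫ x, psiLconv x) = 2 / 3 := by
  unfold psiLconv
  have hpos : ∫ x in (0 : ℝ)..2, (1 - (3 / 2) * |x| + x ^ 2 / 2) =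
      ∫ x in (0 : ℝ)..2, (1 - (3 / 2) * x + x ^ 2 / 2) := by
    refine intervalIntegral.integral_congr fun x hx => ?_
    rw [uIcc_of_le (by norm_num)] at hx
    simp only [abs_of_nonneg hx.1]
  rw [integral_ite_Icc (by norm_num), integral_even (by fun_prop) (fun x => by simp), hpos,
    integral_quartic _ _ 1 (-3 / 2) (1 / 2) 0 0 (fun x => by ring)]
  norm_num

theorem integral_psiLconv_sq : (∫ x, (psiLconv x) ^ 2) = 8 / 15 := by
  unfold psiLconv
  have hpos : ∫ x in (0 : ℝ)..2, (1 - (3 / 2) * |x| + x ^ 2 / 2) ^ 2 =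
      ∫ x in (0 : ℝ)..2, (1 - (3 / 2) * x + x ^ 2 / 2) ^ 2 := by
    refine intervalIntegral.integral_congr fun x hx => ?_
    rw [uIcc_of_le (by norm_num)] at hx
    simp only [abs_of_nonneg hx.1]
  rw [integral_sq_ite_Icc (by norm_num), integral_even (by fun_prop) (fun x => by simp), hpos,
    integral_quartic _ _ 1 (-3) (13 / 4) (-3 / 2) (1 / 4) (fun x => by ring)]
  norm_num

theorem two_rpow_add_half (n : ℕ) {r : ℝ} (hr : r = n + 1 / 2) :
    (2 : ℝ) ^ r = 2 ^ n * √2 := by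
  rw [hr, Real.rpow_add two_pos, Real.rpow_natCast, Real.sqrt_eq_rpow]

theorem integral_psiUconv : (∫ x, psiUconv x) = (2 : ℝ) ^ ((5 : ℝ) / 2) / 3 := by
  unfold psiUconv
  have h2 : √2 ^ 2 = (2 : ℝ) := Real.sq_sqrt (by norm_num)
  rw [integral_ite_Icc (by linarith [Real.sqrt_nonneg 2]),
    integral_quartic _ _ 1 0 (-1 / 2) 0 0 (fun x => by ring),
    two_rpow_add_half 2 (by norm_num)]
  linear_combination (-1 / 3) * √2 * h2

theorem integral_psiUconv_sq : (∫ x, (psiUconv x) ^ 2) = (2 : ℝ) ^ ((9 : ℝ) / 2) / 15 := by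
  unfold psiUconv
  have h2 : √2 ^ 2 = (2 : ℝ) := Real.sq_sqrt (by norm_num)
  rw [integral_sq_ite_Icc (by linarith [Real.sqrt_nonneg 2]),
    integral_quartic _ _ 1 0 (-1) 0 (1 / 4) (fun x => by ring),
    two_rpow_add_half 4 (by norm_num)]
  linear_combination (-2 / 3 * √2 + 1 / 10 * √2 * (√2 ^ 2 + 2)) * h2

/-! ### Shape of the kernels -/

theorem monotone_sub_psiLiso : Monotone fun z => z - psiLiso z := by
  intro x y hxy
  simp only [psiLiso, mem_Icc]
  split_ifs <;> grind

theorem monotone_add_psiUiso : Monotone fun z => z + psiUiso z := by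
  intro x y hxy
  simp only [psiUiso, mem_Icc]
  split_ifs <;> grind

theorem convexOn_sq_sub_psiLconv : ConvexOn ℝ univ fun z => z ^ 2 / 2 - psiLconv z := by
  have habs : ConvexOn ℝ univ fun z : ℝ => |z| := convexOn_norm convex_univ
  have hp : ConvexOn ℝ univ fun z : ℝ => max (|z| - 2) 0 :=
    (habs.sub (concaveOn_const 2 convex_univ)).sup (convexOn_const 0 convex_univ)
  have hp2 : ConvexOn ℝ univ fun z : ℝ => max (|z| - 2) 0 ^ 2 :=
    hp.pow (fun z _ => le_max_right _ _) 2
  have key := ((habs.smul (by norm_num : (0 : ℝ) ≤ 3 / 2)).add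
    ((hp2.add hp).smul (by norm_num : (0 : ℝ) ≤ 1 / 2))).add
    (convexOn_const (-1) convex_univ)
  refine key.congr fun z _ => ?_
  simp only [psiLconv, mem_Icc, ← abs_le, Pi.add_apply, smul_eq_mul]
  split_ifs with hz
  · rw [max_eq_right (by linarith)]
    ring
  · rw [max_eq_left (by linarith), ← sq_abs z]
    ring

theorem convexOn_sq_add_psiUconv : ConvexOn ℝ univ fun z => z ^ 2 / 2 + psiUconv z := by
  have hsq : ConvexOn ℝ univ fun z : ℝ => z ^ 2 := even_two.convexOn_pow
  have key := (convexOn_const (1 : ℝ) convex_univ).sup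
    (hsq.smul (by norm_num : (0 : ℝ) ≤ 1 / 2))
  refine key.congr fun z _ => ?_
  have hiff : |z| ≤ √2 ↔ z ^ 2 ≤ 2 := by
    rw [Real.le_sqrt (abs_nonneg z) zero_le_two, sq_abs]
  simp only [psiUconv, mem_Icc, ← abs_le, hiff, Pi.sup_apply, smul_eq_mul]
  split_ifs with hz
  · rw [sup_eq_left.2 (by linarith)]
    ring
  · rw [sup_eq_right.2 (by linarith)]
    ring

/-! ### Shape of `f` minus its linear or quadratic part -/

/-- `f'(x)` is a subgradient of `f` at `x`, with a quadratic gain due to the strong monotonicity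
of `f'`: integrate `f'(u) ≥ f'(x) + L (u - x)` from `x` to `y`, and the reverse inequality
when `y < x`. -/
theorem subgradient_bound {L : ℝ} {f f' : ℝ → ℝ} (hL : 0 < L)
    (hf : ∀ x y : ℝ, f y - f x = ∫ u in x..y, f' u)
    (hf' : ∀ x y : ℝ, x < y → L * (y - x) ≤ f' y - f' x) (x y : ℝ) :
    f' x * (y - x) + L / 2 * (y - x) ^ 2 ≤ f y - f x := by
  have hmono : Monotone f' := by
    refine StrictMono.monotone fun a b hab => ?_
    have := mul_pos hL (sub_pos.2 hab)
    linarith [hf' a b hab]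
  have hle : ∀ {a b}, a ≤ b → L * (b - a) ≤ f' b - f' a := by
    intro a b hab
    rcases hab.eq_or_lt with rfl | hab
    · simp
    · exact hf' a b hab
  have hlin (a b : ℝ) : ∫ u in a..b, (f' x + L * (u - x)) =
      f' x * (b - a) + L / 2 * ((b - x) ^ 2 - (a - x) ^ 2) := by
    rw [integral_quartic a b (f' x - L * x) L 0 0 0 (fun u => by ring)]
    ring
  have hint (a b : ℝ) : IntervalIntegrable (fun u => f' x + L * (u - x)) volume a b :=
    Continuous.intervalIntegrable (by fun_prop) _ _
  rcases le_total x y with hxy | hyx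
  · have := intervalIntegral.integral_mono_on hxy (hint x y) hmono.intervalIntegrable
      (fun u hu => by linarith [hle hu.1])
    rw [hlin, ← hf] at this
    linarith
  · have := intervalIntegral.integral_mono_on hyx hmono.intervalIntegrable (hint y x)
      (fun u hu => by linarith [hle hu.2])
    rw [hlin, ← hf] at this
    linarith

theorem convexOn_sub_sq {L : ℝ} {f f' : ℝ → ℝ} (hL : 0 < L)
    (hf : ∀ x y : ℝ, f y - f x = ∫ u in x..y, f' u)
    (hf' : ∀ x y : ℝ, x < y → L * (y - x) ≤ f' y - f' x) (t : ℝ) :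
    ConvexOn ℝ univ fun x => f x - L / 2 * (x - t) ^ 2 := by
  refine ⟨convex_univ, fun x _ y _ a b ha hb hab => ?_⟩
  obtain rfl : b = 1 - a := by linarith
  simp only [smul_eq_mul]
  -- Average, with weights `a` and `1 - a`, the subgradient bounds at the intermediate point `z`.
  set z := a * x + (1 - a) * y with hz
  have hx := mul_le_mul_of_nonneg_left (subgradient_bound hL hf hf' z x) ha
  have hy := mul_le_mul_of_nonneg_left (subgradient_bound hL hf hf' z y) hb
  have hlin : a * (f' z * (x - z)) + (1 - a) * (f' z * (y - z)) = 0 := by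
    rw [hz]; ring
  have hquad : a * (x - z) ^ 2 + (1 - a) * (y - z) ^ 2 =
      a * (x - t) ^ 2 + (1 - a) * (y - t) ^ 2 - (z - t) ^ 2 := by
    rw [hz]; ring
  linear_combination hx + hy + hlin - L / 2 * hquad

theorem monotone_sub_linear {L : ℝ} {f : ℝ → ℝ}
    (hf : ∀ x y : ℝ, x < y → L * (y - x) ≤ f y - f x) (t : ℝ) :
    Monotone fun x => f x - L * (x - t) := by
  intro x y hxy
  rcases hxy.eq_or_lt with rfl | hxy
  · rfl
  · linear_combination hf x y hxy

/-! ### Rescaling -/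

theorem monotone_comp_resc {g : ℝ → ℝ} (hg : Monotone g) {h : ℝ} (hh : 0 < h) (t : ℝ) :
    Monotone fun x => g ((x - t) / h) := by
  intro x y hxy
  exact hg (by gcongr)

theorem convexOn_comp_resc {g : ℝ → ℝ} (hg : ConvexOn ℝ univ g) (h t : ℝ) :
    ConvexOn ℝ univ fun x => g ((x - t) / h) := by
  refine ⟨convex_univ, fun x _ y _ a b ha hb hab => ?_⟩
  have := hg.2 (mem_univ ((x - t) / h)) (mem_univ ((y - t) / h)) ha hb hab
  simp only [smul_eq_mul] at this ⊢
  convert this using 2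
  linear_combination (t / h) * hab

/-- Lemma `Nice Psis` (a), (b): values of `⟨1,ψ⟩` and `‖ψ‖²` for the
optimal kernels, and the shape-preservation properties of the perturbations
`f ∓ L h^k ψ_{h,t}`.  All integrals are with respect to Lebesgue measure. -/
theorem stmt16 (h L t : ℝ) (hh : 0 < h) (hL : 0 < L) :
    -- part (a): isotonic case
    ((∫ x, psiLiso x) = 1/2 ∧ (∫ x, psiUiso x) = 1/2 ∧
     (∫ x, (psiLiso x)^2) = 1/3 ∧ (∫ x, (psiUiso x)^2) = 1/3 ∧
     (∀ f : ℝ → ℝ, (∀ x y : ℝ, x < y → L * (y - x) ≤ f y - f x) →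
        Monotone (fun x => f x - L * h * resc psiLiso h t x) ∧
        Monotone (fun x => f x + L * h * resc psiUiso h t x))) ∧
    -- part (b): convex case
    ((∫ x, psiLconv x) = 2/3 ∧ (∫ x, (psiLconv x)^2) = 8/15 ∧
     (∫ x, psiUconv x) = (2:ℝ) ^ ((5:ℝ)/2) / 3 ∧
     (∫ x, (psiUconv x)^2) = (2:ℝ) ^ ((9:ℝ)/2) / 15 ∧
     (∀ f f' : ℝ → ℝ,
        -- `f` is absolutely continuous with derivative `f'`
        (∀ x y : ℝ, f y - f x = ∫ u in x..y, f' u) →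
        (∀ x y : ℝ, x < y → L * (y - x) ≤ f' y - f' x) →
        ConvexOn ℝ univ (fun x => f x - L * h^2 * resc psiLconv h t x) ∧
        ConvexOn ℝ univ (fun x => f x + L * h^2 * resc psiUconv h t x))) := by
  have hLh : 0 ≤ L * h := by positivity
  have hLh2 : 0 ≤ L * h ^ 2 := by positivity
  refine ⟨⟨integral_psiLiso, integral_psiUiso, integral_psiLiso_sq, integral_psiUiso_sq,
    fun f hf => ⟨?_, ?_⟩⟩, integral_psiLconv, integral_psiLconv_sq, integral_psiUconv,
    integral_psiUconv_sq, fun f f' hf hf' => ⟨?_, ?_⟩⟩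
  · convert (monotone_sub_linear hf t).add
      ((monotone_comp_resc monotone_sub_psiLiso hh t).const_mul hLh) using 1
    ext x
    simp only [resc]
    field_simp
    ring
  · convert (monotone_sub_linear hf t).add
      ((monotone_comp_resc monotone_add_psiUiso hh t).const_mul hLh) using 1
    ext x
    simp only [resc]
    field_simp
    ring
  · refine ((convexOn_sub_sq hL hf hf' t).add
      ((convexOn_comp_resc convexOn_sq_sub_psiLconv h t).smul hLh2)).congr fun x _ => ?_
    simp only [resc, Pi.add_apply, smul_eq_mul]
    field_simp
    ring
  · refine ((convexOn_sub_sq hL hf hf' t).add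
      ((convexOn_comp_resc convexOn_sq_add_psiUconv h t).smul hLh2)).congr fun x _ => ?_
    simp only [resc, Pi.add_apply, smul_eq_mul]
    field_simp
    ring
end

section
/- Let (G,k) = (G_↑,1) with kernels ψ^(ℓ)(x) = 1{x∈[−1,0]}(1+x), ψ^(u)(x) = 1{x∈[0,1]}(1−x), or (G,k) = (G_conv,2) with ψ^(ℓ)(x) = 1{x∈[−2,2]}(1−(3/2)|x|+x²/2), ψ^(u)(x) = 1{x∈[−√2,√2]}(1−x²/2). Let L > 0, h > 0, t ∈ ℝ, r ∈ ℝ, and f ∈ H_{k,L}. If f(t) ≥ r, then ∫ ( f(t+hx) − r + L h^k ) ψ^(ℓ)(x) dx ≥ L h^k ∫ (ψ^(ℓ)(x))² dx. If f(t) ≤ r, then ∫ ( f(t+hx) − r − L h^k ) ψ^(u)(x) dx ≤ − L h^k ∫ (ψ^(u)(x))² dx. -/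
/-!
After the substitution `x ↦ t + h x`, each inequality follows from a pointwise bound on the support
of the kernel whose error term has an integral of known sign (`mul_integral_sq_le_integral_mul`).

* Isotonic case: the Lipschitz bound `|f (t + h x) - f t| ≤ L h |x|` is enough pointwise.
* Convex case: put `M = L h²`. The function `D x = M x² / 2 - (f (t + h x) - f t)` vanishes at `0` and
  is convex, since its derivative is nondecreasing (`convexOn_quadratic_sub`). For the kernel
  `ψ^(u) ≥ 0`, the tangent line of `D` at `0` bounds `D` from below, and the linear term integrates to
  `0` by symmetry. The kernel `ψ^(l)` changes sign at `|x| = 1`, from nonnegative to nonpositive.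
  Convexity places `D x` below the chord `|x| D (± 1)` for `|x| ≤ 1` and above it for `|x| ≥ 1`, so in
  both regions `D ψ ≤ |x| D (± 1) ψ`. The right-hand side has integral `0` because
  `∫ x in 0..2, x ψ^(l) x = 0`; the same identity gives `∫ (1 + x² / 2) ψ = ∫ ψ²`.
-/

open MeasureTheory Set

lemma integral_eq_intervalIntegral_of_eq_ite {a b : ℝ} (hab : a ≤ b) {φ p : ℝ → ℝ}
    (hφ : ∀ x, φ x = if x ∈ Icc a b then p x else 0) :
    ∫ x, φ x = ∫ x in a..b, p x := by
  have : φ = (Icc a b).indicator p := by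
    ext x
    rw [hφ, indicator_apply]
  rw [this, integral_indicator measurableSet_Icc, integral_Icc_eq_integral_Ioc,
    intervalIntegral.integral_of_le hab]

/-- Comparison of `c ∫ ψ²` with `∫ F ψ` for a kernel `ψ` equal to `p` on `[a, b]` and `0` elsewhere:
a pointwise comparison on `[a, b]` suffices, up to an error `q` with nonnegative integral. -/
lemma mul_integral_sq_le_integral_mul {a b c : ℝ} (hab : a ≤ b) {ψ p F q : ℝ → ℝ}
    (hψ : ∀ x, ψ x = if x ∈ Icc a b then p x else 0)
    (hp : Continuous p) (hF : Continuous F) (hq : Continuous q)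
    (hle : ∀ x ∈ Icc a b, c * p x ^ 2 + q x ≤ F x * p x)
    (hq0 : 0 ≤ ∫ x in a..b, q x) :
    c * ∫ x, ψ x ^ 2 ≤ ∫ x, F x * ψ x := by
  have h1 : ∫ x, ψ x ^ 2 = ∫ x in a..b, p x ^ 2 := by
    apply integral_eq_intervalIntegral_of_eq_ite hab
    intro x
    rw [hψ]
    split_ifs <;> simp
  have h2 : ∫ x, F x * ψ x = ∫ x in a..b, F x * p x := by
    apply integral_eq_intervalIntegral_of_eq_ite hab
    intro x
    rw [hψ]
    split_ifs <;> simp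
  have h3 : ∫ x in a..b, (c * p x ^ 2 + q x) ≤ ∫ x in a..b, F x * p x :=
    intervalIntegral.integral_mono_on hab
      (Continuous.intervalIntegrable (by fun_prop) _ _)
      (Continuous.intervalIntegrable (by fun_prop) _ _) hle
  rw [intervalIntegral.integral_add (Continuous.intervalIntegrable (by fun_prop) _ _)
    (hq.intervalIntegrable _ _), intervalIntegral.integral_const_mul] at h3
  rw [h1, h2]
  linarith

/-- The upper-bound form of `mul_integral_sq_le_integral_mul`. -/
lemma integral_mul_le_neg_mul_integral_sq {a b c : ℝ} (hab : a ≤ b) {ψ p F q : ℝ → ℝ}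
    (hψ : ∀ x, ψ x = if x ∈ Icc a b then p x else 0)
    (hp : Continuous p) (hF : Continuous F) (hq : Continuous q)
    (hle : ∀ x ∈ Icc a b, F x * p x ≤ -c * p x ^ 2 + q x)
    (hq0 : ∫ x in a..b, q x ≤ 0) :
    ∫ x, F x * ψ x ≤ -c * ∫ x, ψ x ^ 2 := by
  have h := mul_integral_sq_le_integral_mul (c := c) (F := fun x => -F x) (q := fun x => -q x)
    hab hψ hp hF.neg hq.neg
    (fun x hx => by have := hle x hx; linarith)
    (by rw [intervalIntegral.integral_neg]; linarith)
  simp only [neg_mul, integral_neg] at h ⊢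
  linarith

section Convexity

variable {L h t : ℝ} {f f' : ℝ → ℝ}

lemma hasDerivAt_quadratic_sub (hf : ∀ x, HasDerivAt f (f' x) x) (x : ℝ) :
    HasDerivAt (fun x => L * h ^ 2 * x ^ 2 / 2 - (f (t + h * x) - f t))
      (L * h ^ 2 * x - h * f' (t + h * x)) x := by
  have h1 : HasDerivAt (fun x : ℝ => t + h * x) h x := by
    simpa using ((hasDerivAt_id x).const_mul h).const_add t
  have h2 : HasDerivAt (fun x => f (t + h * x)) (f' (t + h * x) * h) x :=
    (hf (t + h * x)).comp x h1
  have h3 : HasDerivAt (fun x : ℝ => L * h ^ 2 * x ^ 2 / 2) (L * h ^ 2 * x) x := by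
    refine (((hasDerivAt_pow 2 x).const_mul (L * h ^ 2)).div_const 2).congr_deriv ?_
    push_cast
    ring
  exact (h3.sub (h2.sub_const (f t))).congr_deriv (by ring)

lemma convexOn_quadratic_sub (hh : 0 < h) (hf : ∀ x, HasDerivAt f (f' x) x)
    (hL : ∀ x y : ℝ, |f' x - f' y| ≤ L * |x - y|) :
    ConvexOn ℝ univ (fun x => L * h ^ 2 * x ^ 2 / 2 - (f (t + h * x) - f t)) := by
  have hd := fun x => hasDerivAt_quadratic_sub (L := L) (h := h) (t := t) hf x
  apply Monotone.convexOn_univ_of_deriv (fun x => (hd x).differentiableAt)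
  intro x y hxy
  rw [(hd x).deriv, (hd y).deriv]
  have h1 := (le_abs_self _).trans (hL (t + h * y) (t + h * x))
  have h2 : t + h * y - (t + h * x) = h * (y - x) := by ring
  rw [h2, abs_of_nonneg (mul_nonneg hh.le (sub_nonneg.2 hxy))] at h1
  nlinarith [mul_le_mul_of_nonneg_left h1 hh.le]

/-- The chord comparison for a convex function vanishing at `0`, weighted by a kernel
`(1 - x) (2 - x) / 2` that changes sign at the endpoint `1` of the chord. -/
lemma ConvexOn.mul_kernel_le {D : ℝ → ℝ} (hD : ConvexOn ℝ univ D) (h0 : D 0 = 0) {s x : ℝ}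
    (hx0 : 0 ≤ x) (hx2 : x ≤ 2) :
    D (s * x) * (1 - 3 / 2 * x + x ^ 2 / 2) ≤ x * D s * (1 - 3 / 2 * x + x ^ 2 / 2) := by
  rcases le_total x 1 with h1 | h1
  · have hc := hD.2 (mem_univ s) (mem_univ 0) hx0 (sub_nonneg.2 h1) (by ring)
    simp only [smul_eq_mul, mul_zero, add_zero, h0] at hc
    rw [mul_comm x s] at hc
    apply mul_le_mul_of_nonneg_right hc
    nlinarith
  · have hxpos : 0 < x := by linarith
    have hc := hD.2 (mem_univ (s * x)) (mem_univ 0) (inv_nonneg.2 hx0)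
      (sub_nonneg.2 (inv_le_one_of_one_le₀ h1)) (by ring)
    simp only [smul_eq_mul, mul_zero, add_zero, h0] at hc
    have e : x⁻¹ * (s * x) = s := by field_simp
    rw [e] at hc
    have hc' : x * D s ≤ D (s * x) := by
      have := mul_le_mul_of_nonneg_left hc hx0
      rwa [← mul_assoc, mul_inv_cancel₀ hxpos.ne', one_mul] at this
    apply mul_le_mul_of_nonpos_right hc'
    nlinarith

end Convexity

lemma integral_psiLconv_weight (a A B : ℝ) :
    ∫ x in (-2 : ℝ)..2, (a + A * |x| + B * x) * (1 - 3 / 2 * |x| + x ^ 2 / 2) = 2 / 3 * a := by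
  have hc : Continuous fun x : ℝ => (a + A * |x| + B * x) * (1 - 3 / 2 * |x| + x ^ 2 / 2) := by
    fun_prop
  have hpos : ∫ x in (0 : ℝ)..2, (a + A * |x| + B * x) * (1 - 3 / 2 * |x| + x ^ 2 / 2)
      = a / 3 := by
    have hd : ∀ x ∈ uIcc (0 : ℝ) 2, HasDerivAt
        (fun x : ℝ => a * (x - 3 / 4 * x ^ 2 + x ^ 3 / 6)
          + (A + B) * (x ^ 2 / 2 - x ^ 3 / 2 + x ^ 4 / 8))
        ((a + A * |x| + B * x) * (1 - 3 / 2 * |x| + x ^ 2 / 2)) x := by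
      intro x hx
      rw [uIcc_of_le (by norm_num)] at hx
      rw [abs_of_nonneg hx.1]
      have p (n : ℕ) := hasDerivAt_pow n x
      refine ((((((hasDerivAt_id x).sub ((p 2).const_mul (3 / 4))).add ((p 3).div_const 6)).const_mul
        a).add (((((p 2).div_const 2).sub ((p 3).div_const 2)).add
          ((p 4).div_const 8)).const_mul (A + B)))).congr_deriv ?_
      push_cast
      ring
    rw [intervalIntegral.integral_eq_sub_of_hasDerivAt hd (hc.intervalIntegrable _ _)]
    ring
  have hneg : ∫ x in (-2 : ℝ)..0, (a + A * |x| + B * x) * (1 - 3 / 2 * |x| + x ^ 2 / 2)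
      = a / 3 := by
    have hd : ∀ x ∈ uIcc (-2 : ℝ) 0, HasDerivAt
        (fun x : ℝ => a * (x + 3 / 4 * x ^ 2 + x ^ 3 / 6)
          + (B - A) * (x ^ 2 / 2 + x ^ 3 / 2 + x ^ 4 / 8))
        ((a + A * |x| + B * x) * (1 - 3 / 2 * |x| + x ^ 2 / 2)) x := by
      intro x hx
      rw [uIcc_of_le (by norm_num)] at hx
      rw [abs_of_nonpos hx.2]
      have p (n : ℕ) := hasDerivAt_pow n x
      refine ((((((hasDerivAt_id x).add ((p 2).const_mul (3 / 4))).add ((p 3).div_const 6)).const_mul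
        a).add (((((p 2).div_const 2).add ((p 3).div_const 2)).add
          ((p 4).div_const 8)).const_mul (B - A)))).congr_deriv ?_
      push_cast
      ring
    rw [intervalIntegral.integral_eq_sub_of_hasDerivAt hd (hc.intervalIntegrable _ _)]
    ring
  rw [← intervalIntegral.integral_add_adjacent_intervals (hc.intervalIntegrable _ 0)
    (hc.intervalIntegrable _ _), hpos, hneg]
  ring

lemma integral_psiUconv_weight (a b : ℝ) :
    ∫ x in (-√2)..√2, (a + b * x) * (1 - x ^ 2 / 2) = 4 * √2 / 3 * a := by
  have hc : Continuous fun x : ℝ => (a + b * x) * (1 - x ^ 2 / 2) := by fun_prop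
  have hd : ∀ x ∈ uIcc (-√2) √2, HasDerivAt
      (fun x : ℝ => a * (x - x ^ 3 / 6) + b * (x ^ 2 / 2 - x ^ 4 / 8))
      ((a + b * x) * (1 - x ^ 2 / 2)) x := by
    intro x _
    have p (n : ℕ) := hasDerivAt_pow n x
    refine ((((hasDerivAt_id x).sub ((p 3).div_const 6)).const_mul a).add
      ((((p 2).div_const 2).sub ((p 4).div_const 8)).const_mul b)).congr_deriv ?_
    push_cast
    ring
  rw [intervalIntegral.integral_eq_sub_of_hasDerivAt hd (hc.intervalIntegrable _ _)]
  have h3 : √2 ^ 3 = 2 * √2 := by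
    rw [pow_succ, Real.sq_sqrt (by norm_num)]
  linear_combination (-a / 3) * h3

/-- Lemma `Nice Psis` (c): the key integral inequalities for the
optimal kernels, for functions in the Hölder classes `H_{k,L}`, `k = 1, 2`.
All integrals are with respect to Lebesgue measure. -/
theorem stmt17 (L h t r : ℝ) (hL : 0 < L) (hh : 0 < h) :
    -- case (G, k) = (G_↑, 1), f ∈ H_{1,L}
    (∀ f : ℝ → ℝ, (∀ x y : ℝ, |f x - f y| ≤ L * |x - y|) →
      (r ≤ f t →
        L * h * ∫ x, (psiLiso x)^2 ≤ ∫ x, (f (t + h * x) - r + L * h) * psiLiso x) ∧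
      (f t ≤ r →
        ∫ x, (f (t + h * x) - r - L * h) * psiUiso x ≤ -(L * h) * ∫ x, (psiUiso x)^2)) ∧
    -- case (G, k) = (G_conv, 2), f ∈ H_{2,L}
    (∀ f f' : ℝ → ℝ, (∀ x : ℝ, HasDerivAt f (f' x) x) →
      (∀ x y : ℝ, |f' x - f' y| ≤ L * |x - y|) →
      (r ≤ f t →
        L * h^2 * ∫ x, (psiLconv x)^2 ≤
          ∫ x, (f (t + h * x) - r + L * h^2) * psiLconv x) ∧
      (f t ≤ r →
        ∫ x, (f (t + h * x) - r - L * h^2) * psiUconv x ≤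
          -(L * h^2) * ∫ x, (psiUconv x)^2)) := by
  refine ⟨fun f hf => ?_, fun f f' hf hf' => ?_⟩
  · have hcont : Continuous f :=
      (LipschitzWith.of_dist_le_mul (K := L.toNNReal) fun x y => by
        rw [Real.coe_toNNReal L hL.le]
        exact hf x y).continuous
    have hbd : ∀ x, |f (t + h * x) - f t| ≤ L * h * |x| := by
      intro x
      have := hf (t + h * x) t
      rwa [add_sub_cancel_left, abs_mul, abs_of_pos hh, ← mul_assoc] at this
    constructor
    · intro hr
      refine mul_integral_sq_le_integral_mul (q := fun _ => 0) (p := fun x => 1 + x)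
        (by norm_num) (fun x => rfl) (by fun_prop) (by fun_prop) (by fun_prop) ?_ (by simp)
      intro x hx
      have h1 := (abs_le.1 (hbd x)).1
      rw [abs_of_nonpos hx.2] at h1
      have h2 : L * h * (1 + x) ≤ f (t + h * x) - r + L * h := by linarith
      have := mul_le_mul_of_nonneg_right h2 (by linarith [hx.1] : 0 ≤ 1 + x)
      linarith
    · intro hr
      refine integral_mul_le_neg_mul_integral_sq (q := fun _ => 0) (p := fun x => 1 - x)
        (by norm_num) (fun x => rfl) (by fun_prop) (by fun_prop) (by fun_prop) ?_ (by simp)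
      intro x hx
      have h1 := (abs_le.1 (hbd x)).2
      rw [abs_of_nonneg hx.1] at h1
      have h2 : f (t + h * x) - r - L * h ≤ -(L * h) * (1 - x) := by linarith
      have := mul_le_mul_of_nonneg_right h2 (by linarith [hx.2] : 0 ≤ 1 - x)
      linarith
  · have hcont : Continuous f :=
      continuous_iff_continuousAt.2 fun x => (hf x).continuousAt
    have hconv := convexOn_quadratic_sub (t := t) hh hf hf'
    have hder := hasDerivAt_quadratic_sub (L := L) (h := h) (t := t) hf 0
    set D : ℝ → ℝ := fun x => L * h ^ 2 * x ^ 2 / 2 - (f (t + h * x) - f t) with hD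
    have hD0 : D 0 = 0 := by simp [hD]
    have hfD : ∀ x, f (t + h * x) = f t + L * h ^ 2 * x ^ 2 / 2 - D x := by
      intro x
      simp only [hD]
      ring
    constructor
    · intro hr
      -- The `|x|` and `x` terms of `q` combine to `3/2 L h² |x| - |x| D (± 1)`, the sign being that of `x`.
      refine mul_integral_sq_le_integral_mul
        (p := fun x => 1 - 3 / 2 * |x| + x ^ 2 / 2)
        (q := fun x => (f t - r + (3 / 2 * (L * h ^ 2) - (D 1 + D (-1)) / 2) * |x|
          + ((D (-1) - D 1) / 2) * x) * (1 - 3 / 2 * |x| + x ^ 2 / 2))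
        (by norm_num) (fun x => rfl) (by fun_prop) (by fun_prop) (by fun_prop) ?_ ?_
      · intro x hx
        simp only [hfD]
        rcases le_total 0 x with h0 | h0
        · have := hconv.mul_kernel_le hD0 (s := 1) h0 hx.2
          rw [one_mul] at this
          rw [abs_of_nonneg h0]
          linarith
        · have := hconv.mul_kernel_le hD0 (s := -1) (x := -x) (by linarith) (by linarith [hx.1])
          rw [neg_one_mul, neg_neg, neg_sq] at this
          rw [abs_of_nonpos h0]
          linarith
      · rw [integral_psiLconv_weight]
        linarith
    · intro hr
      have htan : ∀ x, -(h * f' t) * x ≤ D x := by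
        intro x
        have hz : L * h ^ 2 * 0 - h * f' (t + h * 0) = -(h * f' t) := by simp
        rw [hz] at hder
        rcases lt_trichotomy x 0 with h0 | h0 | h0
        · have := hconv.slope_le_of_hasDerivAt (mem_univ x) (mem_univ 0) h0 hder
          rw [slope_def_field, hD0, div_le_iff₀ (by linarith)] at this
          linarith
        · simp [h0, hD0]
        · have := hconv.le_slope_of_hasDerivAt (mem_univ 0) (mem_univ x) h0 hder
          rw [slope_def_field, hD0, le_div_iff₀ (by linarith)] at this
          linarith
      refine integral_mul_le_neg_mul_integral_sq
        (p := fun x => 1 - x ^ 2 / 2)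
        (q := fun x => (f t - r + h * f' t * x) * (1 - x ^ 2 / 2))
        (by linarith [Real.sqrt_nonneg 2]) (fun x => rfl)
        (by fun_prop) (by fun_prop) (by fun_prop) ?_ ?_
      · intro x hx
        simp only [hfD]
        have hp : 0 ≤ 1 - x ^ 2 / 2 := by
          have := Real.sq_le (by norm_num : (0 : ℝ) ≤ 2) |>.2 ⟨hx.1, hx.2⟩
          linarith
        have := mul_le_mul_of_nonneg_right (htan x) hp
        linarith
      · rw [integral_psiUconv_weight]
        exact mul_nonpos_of_nonneg_of_nonpos (by positivity) (by linarith)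
end

section
/- Let ℓ, u : [0,1] → [−∞,∞] be functions such that there exists at least one nondecreasing g₀ : [0,1] → [−∞,∞] with ℓ ≤ g₀ ≤ u pointwise on [0,1]. Then for every x ∈ [0,1]: inf{ g(x) : g : [0,1] → [−∞,∞] nondecreasing, ℓ ≤ g ≤ u on [0,1] } = sup_{t ∈ [0,x]} ℓ(t), and sup{ g(x) : g : [0,1] → [−∞,∞] nondecreasing, ℓ ≤ g ≤ u on [0,1] } = inf_{s ∈ [x,1]} u(s). In particular, both extremal bounds are themselves nondecreasing functions lying between ℓ and u. -/
/-!
Every admissible `g` satisfies `ℓ t ≤ g t ≤ g x` for `t ≤ x` and `g x ≤ g s ≤ u s` for `x ≤ s`,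
hence lies between the running supremum of `ℓ` and the running infimum of `u`
(`iSup_le_of_band`, `le_iInf_of_band`). Applied to `g₀`, these bounds show that both running
extrema lie in the band; they are nondecreasing because the index intervals are nested. They are
thus admissible themselves, so they are the least and the greatest admissible function.
-/

open Set

theorem iSup_le_of_band {ℓ g : ℝ → EReal} (hg : MonotoneOn g (Icc (0:ℝ) 1))
    (hℓ : ∀ t ∈ Icc (0:ℝ) 1, ℓ t ≤ g t) {x : ℝ} (hx : x ∈ Icc (0:ℝ) 1) :
    (⨆ t : Icc (0:ℝ) x, ℓ t) ≤ g x :=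
  iSup_le fun t =>
    have ht : (t : ℝ) ∈ Icc (0:ℝ) 1 := ⟨t.2.1, t.2.2.trans hx.2⟩
    (hℓ t ht).trans (hg ht hx t.2.2)

theorem le_iInf_of_band {u g : ℝ → EReal} (hg : MonotoneOn g (Icc (0:ℝ) 1))
    (hu : ∀ t ∈ Icc (0:ℝ) 1, g t ≤ u t) {x : ℝ} (hx : x ∈ Icc (0:ℝ) 1) :
    g x ≤ ⨅ s : Icc x (1:ℝ), u s :=
  le_iInf fun s =>
    have hs : (s : ℝ) ∈ Icc (0:ℝ) 1 := ⟨hx.1.trans s.2.1, s.2.2⟩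
    (hg hx hs s.2.1).trans (hu s hs)

/-- postprocessing of confidence bands in the isotonic case.  If some
nondecreasing `g₀ : [0,1] → [-∞,∞]` fits between `ℓ` and `u`, then the pointwise
infimum (resp. supremum) of `g x` over all nondecreasing `g` with `ℓ ≤ g ≤ u` on
`[0,1]` equals `sup_{t ∈ [0,x]} ℓ t` (resp. `inf_{s ∈ [x,1]} u s`); moreover these
two extremal bounds are nondecreasing on `[0,1]` and lie between `ℓ` and `u`. -/
theorem stmt18 (ℓ u : ℝ → EReal)
    (hne : ∃ g₀ : ℝ → EReal, MonotoneOn g₀ (Icc (0:ℝ) 1) ∧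
      ∀ t ∈ Icc (0:ℝ) 1, ℓ t ≤ g₀ t ∧ g₀ t ≤ u t) :
    (∀ x ∈ Icc (0:ℝ) 1,
      sInf {y : EReal | ∃ g : ℝ → EReal, MonotoneOn g (Icc (0:ℝ) 1) ∧
          (∀ t ∈ Icc (0:ℝ) 1, ℓ t ≤ g t ∧ g t ≤ u t) ∧ y = g x} =
        ⨆ t : Icc (0:ℝ) x, ℓ t) ∧
    (∀ x ∈ Icc (0:ℝ) 1,
      sSup {y : EReal | ∃ g : ℝ → EReal, MonotoneOn g (Icc (0:ℝ) 1) ∧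
          (∀ t ∈ Icc (0:ℝ) 1, ℓ t ≤ g t ∧ g t ≤ u t) ∧ y = g x} =
        ⨅ s : Icc x (1:ℝ), u s) ∧
    MonotoneOn (fun x => ⨆ t : Icc (0:ℝ) x, ℓ t) (Icc (0:ℝ) 1) ∧
    MonotoneOn (fun x => ⨅ s : Icc x (1:ℝ), u s) (Icc (0:ℝ) 1) ∧
    (∀ x ∈ Icc (0:ℝ) 1,
      ℓ x ≤ (⨆ t : Icc (0:ℝ) x, ℓ t) ∧ (⨆ t : Icc (0:ℝ) x, ℓ t) ≤ u x ∧
      ℓ x ≤ (⨅ s : Icc x (1:ℝ), u s) ∧ (⨅ s : Icc x (1:ℝ), u s) ≤ u x) := by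
  obtain ⟨g₀, hg₀, hb⟩ := hne
  have mL : MonotoneOn (fun x => ⨆ t : Icc (0:ℝ) x, ℓ t) (Icc (0:ℝ) 1) := fun x _ y _ hxy =>
    iSup_le fun t => le_iSup (fun t : Icc (0:ℝ) y => ℓ t) ⟨t, t.2.1, t.2.2.trans hxy⟩
  have mU : MonotoneOn (fun x => ⨅ s : Icc x (1:ℝ), u s) (Icc (0:ℝ) 1) := fun x _ y _ hxy =>
    le_iInf fun s => iInf_le (fun s : Icc x (1:ℝ) => u s) ⟨s, hxy.trans s.2.1, s.2.2⟩
  have hL : ∀ x ∈ Icc (0:ℝ) 1,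
      ℓ x ≤ (⨆ t : Icc (0:ℝ) x, ℓ t) ∧ (⨆ t : Icc (0:ℝ) x, ℓ t) ≤ u x := fun x hx =>
    ⟨le_iSup (fun t : Icc (0:ℝ) x => ℓ t) ⟨x, hx.1, le_rfl⟩,
      (iSup_le_of_band hg₀ (fun t ht => (hb t ht).1) hx).trans (hb x hx).2⟩
  have hU : ∀ x ∈ Icc (0:ℝ) 1,
      ℓ x ≤ (⨅ s : Icc x (1:ℝ), u s) ∧ (⨅ s : Icc x (1:ℝ), u s) ≤ u x := fun x hx =>
    ⟨(hb x hx).1.trans (le_iInf_of_band hg₀ (fun t ht => (hb t ht).2) hx),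
      iInf_le (fun s : Icc x (1:ℝ) => u s) ⟨x, le_rfl, hx.2⟩⟩
  refine ⟨fun x hx => ?_, fun x hx => ?_, mL, mU,
    fun x hx => ⟨(hL x hx).1, (hL x hx).2, (hU x hx).1, (hU x hx).2⟩⟩
  · apply le_antisymm
    · exact sInf_le ⟨_, mL, hL, rfl⟩
    · apply le_sInf
      rintro _ ⟨g, hg, hgb, rfl⟩
      exact iSup_le_of_band hg (fun t ht => (hgb t ht).1) hx
  · apply le_antisymm
    · apply sSup_le
      rintro _ ⟨g, hg, hgb, rfl⟩
      exact le_iInf_of_band hg (fun t ht => (hgb t ht).2) hx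
    · exact le_sSup ⟨_, mU, hU, rfl⟩
end
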